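/- Let g be the simple complex Lie algebra of type E₈. Then there exists an sl₂-triple (e,h,f) in g such that the centralizer g_e has dimension 84, its derived subalgebra [g_e, g_e] has dimension 83, and e ∉ [g_e, g_e]; consequently g_e is the direct sum of the span of e and [g_e, g_e]. -/

import Mathlib

namespace PaperStmt

open LieAlgebra Module

variable (R : Type*) {L : Type*} [CommRing R] [LieRing L] [LieAlgebra R L]

/-- The centralizer `g_x = {y ∈ g | ⁅y, x⁆ = 0}` of an element of a Lie algebra,
as a Lie subalgebra. -/
def centralizerOf (x : L) : LieSubalgebra R L where
  carrier := {y : L | ⁅y, x⁆ = 0}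
  add_mem' := fun {a b} (ha : ⁅a, x⁆ = 0) (hb : ⁅b, x⁆ = 0) => by
    show ⁅a + b, x⁆ = 0
    rw [add_lie, ha, hb, add_zero]
  zero_mem' := zero_lie x
  smul_mem' := fun c a (ha : ⁅a, x⁆ = 0) => by
    show ⁅c • a, x⁆ = 0
    rw [smul_lie, ha, smul_zero]
  lie_mem' := fun {a b} (ha : ⁅a, x⁆ = 0) (hb : ⁅b, x⁆ = 0) => by
    show ⁅⁅a, b⁆, x⁆ = 0
    rw [lie_lie, ha, hb, lie_zero, lie_zero, sub_zero]

/-- The subspace spanned by the brackets `⁅x, y⁆` with `x ∈ A`, `y ∈ B`. -/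
def bracketSpan (A B : Submodule R L) : Submodule R L :=
  Submodule.span R {z : L | ∃ x ∈ A, ∃ y ∈ B, z = ⁅x, y⁆}

/-- The derived subalgebra `[k, k]` of a Lie subalgebra `k`, as a subspace of the
ambient Lie algebra: the span of all brackets `⁅a, b⁆` with `a, b ∈ k`. -/
def derivedOf (K : LieSubalgebra R L) : Submodule R L :=
  bracketSpan R K.toSubmodule K.toSubmodule

/-- An element `e` of a Lie algebra is reachable if `e ∈ [g_e, g_e]`. -/
def IsReachable (e : L) : Prop :=
  e ∈ derivedOf R (centralizerOf R e)

/-- `g(k)`, the `k`-eigenspace of `ad h`. -/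
def gradePiece (h : L) (k : ℤ) : Submodule R L :=
  Module.End.eigenspace (LieAlgebra.ad R L h) (k : R)

/-- `g(k)_e = g(k) ∩ g_e`. -/
def gradePieceCent (e h : L) (k : ℤ) : Submodule R L :=
  gradePiece R h k ⊓ (centralizerOf R e).toSubmodule

/-- `g(≥1)_e`, the sum of the subspaces `g(k)_e` over all `k ≥ 1`. -/
def gradeGeOneCent (e h : L) : Submodule R L :=
  ⨆ k ∈ {k : ℤ | 1 ≤ k}, gradePieceCent R e h k

end PaperStmt

section

namespace E8Model

set_option synthInstance.maxHeartbeats 400000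
set_option synthInstance.maxSize 10000

/-- Packed table: byte `k` of `upT i` is the index of the root `β_k + α_i` (255 if not a root). -/
def upT : ℕ → ℕ
  | 0 => 9745314011399999080058275798675854136762945954284923532550288661504405217403640661216689732940290831149530339564562594014576719052352692650021748117423684512731894576583786733635850732289708141503636055802258850966917961710502978210037670381560510932738057604674926304908766020824994480127
  | 1 => 9745314011399980011032829238235796981123405415485881640508540405377793694399062524565160720017680149167495627787190233053148472155048645339182323435112162045117482145650837027328309888236483315421563584517978493494585894515079262540210553077998856299805423875222032669456213267193918390271
  | 2 => 9745314011399999005862708816602874543577271786995691150558701615451706879383942969776594208251187186253406250088737669399250051995747705212139136216976062192787622836221105251247565820093657727490897977686762219064576162558517408628852355054839055969905827825450373712137354380249728548616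
  | 3 => 9745314011395151956898431395907687922152925059778817249822457594744617090751290114181800074018836755315633728800602485266431782866060745067849329947796282718148707431082518512500481840659934787849528599381967860141771962581856764043458960429174019021227726787797259496217368303602596710911
  | 4 => 9745314010167998787346414809172160487299771146231815203718830148784823865477169994610255681478219226935248975663923245391246534723920387436080487000301323117986587072021061353662880251442007958650554441360942244203354010808300982346617152819963877201203648913012595255702493622631227457535
  | 5 => 9745313698276931804453018212257779947995975559759671296567022121985730420317957007970863479415358868797784857554665014815569339191105895472422516549137225585972855328140213340738217941449392234305253125123093648765393640224573138471547210150465534289942174440598201928709042967351230726143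
  | 6 => 9745234432760756323994162335311810757604063582109739843332097415620399015522581584274039793719079197606279322277827059865046076620861339848297772321686972659960905429052499795739907600186978043126272438318660261023767341840161507763872071486594537502338162521214490085113914318753330364415
  | 7 => 9725090581444701230699328737900349663258441718852439761984107655562529154566403519355347860668861224514689216799305151777453486624594189696112896447790505248165915796989082502323631074510674068292532361176297448773527932915516811829589805283005772400336949590151890791940835898159114747903
  | _ => 0

/-- Packed table: byte `k` of `dnT i` is the index of the positive root `β_k - α_i`
(255 if it is not one). -/
def dnT : ℕ → ℕ
  | 0 => 9745314011399999004277792960451875547971176934701128954409785288025205345262762585352821142227165078794636260477567798960552204281395834453106204218507525545828603694405972396454835772883663283960943488460260610723307325411407082625350178608573645750965139645440940442963256807861874851839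
  | 1 => 9745314011395082635373646410438356038476150246920606872132217609407960182740380214812410344610245335394106906165911764008991527745289055402766831700005105221278780219508091668110306980410515874163283527951322266930450228720718806373523248485836996559051039416589048144046751352218854621183
  | 2 => 9745314011395028479674258136974524133644499763740896075903716114697826407414959709036756402463839951395246840399269319724140113296890696719053404680295060513501641945952016704558837883827209124795194296746816106651726680582587355596636385804354648646960517737197742806119421192456886026239
  | 3 => 9745314010150272164424261599727799217422227515976464981684887449350680783913333517100136165921903185093669258940280853297431099127727496463714114692216216656535471649940815585249407633637664203781815103153228897278773062060807093551693438864110522351358046821579526148503376726427623751679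
  | 4 => 9745313693738916336686346249283590642310966345627061887516470667023347759063584489409262563337935086133161459951312577984690845241758980234504971993957781930580686542833433914168103868914464876789365180964720574262821008521916670337201962514334151641150084990298727481845028496538544898047
  | 5 => 9745233271028796575726144524325198787944296590304130971890178550793469544452410018002177603334631698192030870867912632152072749213932620464449996312331557281643617981641164411484940023965271035460829764959630207492993786490075531302360406621269028106346769036105797293560576759981116751871
  | 6 => 9724793178063005674086769125400719683129075235747354482718086342402566050969883598474571675182518889726715773468382295167385480701824992704315384923192892740878760636600151780946934310819169917386295752818815562800390223232508830246403855520481126564287788033147870093807981847755291099135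
  | 7 => 4530048309986718322508017594363857066383871077274964920456131591663675404043080780319094233338256794083818025168789347818254768900281903949595829382511191810902260868329293995056419957438630978184837624261504626097468587167891925802662238537677557146293726417371377259297014716885830205439
  | _ => 0

/-- Entries of the Cartan matrix of type `E₈`. -/
def cz (i j : ℕ) : ℤ :=
  if i = j then 2 else
  if (i = 0 ∧ j = 2) ∨ (i = 2 ∧ j = 0) ∨ (i = 1 ∧ j = 3) ∨ (i = 3 ∧ j = 1) ∨
    (2 ≤ i ∧ 2 ≤ j ∧ (i = j + 1 ∨ j = i + 1)) then -1 else 0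

/-- A two-colouring of the Dynkin diagram. -/
def sg : ℕ → ℤ
  | 0 => 1
  | 3 => 1
  | 5 => 1
  | 7 => 1
  | _ => -1

/-- Index of `β_k + α_i`. -/
def up (i k : ℕ) : ℕ := if k < 120 then upT i / 256 ^ k % 256 else 255

/-- Index of `β_k - α_i`. -/
def dn (i k : ℕ) : ℕ := if k < 120 then dnT i / 256 ^ k % 256 else 255

/-- A simple root that can be subtracted from `β_k`. -/
def pj (k : ℕ) : Fin 8 :=
  if dn 0 k ≠ 255 then 0 else if dn 1 k ≠ 255 then 1 else if dn 2 k ≠ 255 then 2 else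
  if dn 3 k ≠ 255 then 3 else if dn 4 k ≠ 255 then 4 else if dn 5 k ≠ 255 then 5 else
  if dn 6 k ≠ 255 then 6 else 7

/-- Index of `β_k - α_(pj k)`. -/
def pp (k : ℕ) : ℕ := dn (pj k) k

/-- Pairing of `β_k` with the `i`-th simple coroot. -/
def wtp (i k : ℕ) : ℤ :=
  if k = i then 2 else (if dn i k = 255 then 0 else 1) - (if up i k = 255 then 0 else 1)

/-- The five reasons for which `[E_i, Y_k] = 0`. -/
def zeroReason (i k j : ℕ) : Prop :=
  dn j k < k ∧ up j (dn j k) = k ∧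
  ((cz i j = 0 ∧ up i (dn j k) = 255) ∨
   (j = i ∧ dn j k < 8 ∧ cz i (dn j k) = -1) ∨
   (j = i ∧ ∃ m < 8, dn m (dn j k) < dn j k ∧ up m (dn m (dn j k)) = dn j k ∧
      ((cz i m = 0 ∧ up i (dn m (dn j k)) < k ∧ up i (up i (dn m (dn j k))) = 255) ∨
       (cz i m = 0 ∧ up i (dn m (dn j k)) = 255) ∨
       (cz i m = -1 ∧ up i (dn m (dn j k)) = 255))) ∨
   (cz i j = -1 ∧ dn i (dn j k) < dn j k ∧ up i (dn i (dn j k)) = dn j k ∧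
      up j (dn i (dn j k)) = 255 ∧ up i (dn j k) = 255))

instance (i k j : ℕ) : Decidable (zeroReason i k j) := by unfold zeroReason; infer_instance

theorem chk_cartan (i j : Fin 8) : CartanMatrix.E₈ i j = cz i j := by
  fin_cases i <;> fin_cases j <;> rfl

theorem chk_cz_cases : ∀ i < 8, ∀ j < 8, i = j ∨ cz i j = 0 ∨ cz i j = -1 := by decide +kernel

theorem chk_cz_symm : ∀ i < 8, ∀ j < 8, cz i j = cz j i := by decide +kernel

theorem chk_sg : ∀ i < 8, ∀ j < 8, cz i j = -1 → sg i = - sg j := by decide +kernel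

theorem chk_sg_sq : ∀ i < 8, sg i * sg i = 1 := by decide +kernel

theorem chk_par : ∀ k < 120, 8 ≤ k →
    pp k < k ∧ pp k ≠ pj k ∧ dn (pj k) (pp k) = 255 ∧ wtp (pj k) (pp k) = -1 := by
  decide +kernel

theorem chk_up_simple : ∀ k < 8, ∀ i < 8,
    (cz i k = -1 → 8 ≤ up i k ∧ up i k < 120 ∧
      ((pj (up i k) = i ∧ pp (up i k) = k) ∨ (pj (up i k) = k ∧ pp (up i k) = i))) ∧
    (cz i k ≠ -1 → up i k = 255) ∧ dn i k = 255 ∧ wtp i k = cz i k := by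
  decide +kernel

theorem chk_up : ∀ k < 120, 8 ≤ k → ∀ i < 8,
    (up i k ≠ 255 → 8 ≤ up i k ∧ up i k < 120 ∧
      ((pj (up i k) = i ∧ pp (up i k) = k) ∨
       (dn (pj (up i k)) k < k ∧ up (pj (up i k)) (dn (pj (up i k)) k) = k ∧
         up i (dn (pj (up i k)) k) = pp (up i k) ∧ cz i (pj (up i k)) = 0))) ∧
    (up i k = 255 → ∃ j < 8, zeroReason i k j) := by
  decide +kernel

theorem chk_wt : ∀ k < 120, 8 ≤ k → ∀ i < 8, wtp i k = cz i (pj k) + wtp i (pp k) := by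
  decide +kernel

theorem chk_dn : ∀ k < 120, 8 ≤ k → ∀ i < 8, i ≠ (pj k : ℕ) →
    (pp k = i → dn i k = pj k ∧ cz i (pj k) = -1) ∧
    (pp k ≠ i → dn i k = up (pj k) (dn i (pp k)) ∧ (dn i (pp k) < 120 ∨ dn i (pp k) = 255)) := by
  decide +kernel

end E8Model

end

section

namespace E8Model

set_option linter.unusedSectionVars false

section System

variable {L : Type*} [LieRing L] [LieAlgebra ℂ L]

/-- Elements of a Lie algebra satisfying the Serre relations of type `E₈`. -/
structure Sys (E F H : Fin 8 → L) : Prop where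
  hh : ∀ i j, ⁅H i, H j⁆ = 0
  ef_same : ∀ i, ⁅E i, F i⁆ = H i
  ef_ne : ∀ i j, i ≠ j → ⁅E i, F j⁆ = 0
  he : ∀ i j : Fin 8, ⁅H i, E j⁆ = (cz i j) • E j
  hf : ∀ i j : Fin 8, ⁅H i, F j⁆ = -((cz i j) • F j)
  ee0 : ∀ i j : Fin 8, cz i j = 0 → ⁅E i, E j⁆ = 0
  ee1 : ∀ i j : Fin 8, cz i j = -1 → ⁅E i, ⁅E i, E j⁆⁆ = 0
  ff0 : ∀ i j : Fin 8, cz i j = 0 → ⁅F i, F j⁆ = 0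
  ff1 : ∀ i j : Fin 8, cz i j = -1 → ⁅F i, ⁅F i, F j⁆⁆ = 0

theorem Sys.swap {E F H : Fin 8 → L} (S : Sys E F H) : Sys F E (fun i => - H i) where
  hh i j := by simp [S.hh]
  ef_same i := by rw [← lie_skew, S.ef_same]
  ef_ne i j h := by rw [← lie_skew, S.ef_ne j i (Ne.symm h), neg_zero]
  he i j := by simp [S.hf]
  hf i j := by simp [S.he]
  ee0 := S.ff0
  ee1 := S.ff1
  ff0 := S.ee0
  ff1 := S.ee1

/-- Root vectors for the positive roots. -/
noncomputable def Y (E : Fin 8 → L) (ε : ℤ) (k : ℕ) : L :=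
  if h : k < 8 then (ε * sg k) • E ⟨k, h⟩
  else if _h : k < 120 ∧ pp k < k then ⁅E (pj k), Y E ε (pp k)⁆ else 0
termination_by k
decreasing_by exact _h.2

theorem Y_simple (E : Fin 8 → L) (ε : ℤ) (i : Fin 8) : Y E ε i = (ε * sg i) • E i := by
  rw [Y]; simp

theorem Y_simple' (E : Fin 8 → L) (ε : ℤ) (k : ℕ) (h : k < 8) :
    Y E ε k = (ε * sg k) • E ⟨k, h⟩ := Y_simple E ε ⟨k, h⟩

theorem Y_step (E : Fin 8 → L) (ε : ℤ) {k : ℕ} (h8 : 8 ≤ k) (h : k < 120) :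
    Y E ε k = ⁅E (pj k), Y E ε (pp k)⁆ := by
  rw [Y, dif_neg (by omega), dif_pos ⟨h, (chk_par k h h8).1⟩]

theorem Y_big (E : Fin 8 → L) (ε : ℤ) {k : ℕ} (h : 120 ≤ k) : Y E ε k = 0 := by
  rw [Y, dif_neg (by omega), dif_neg (by omega)]

/-- The zero weight vectors. -/
def U (H : Fin 8 → L) (ε : ℤ) (i : Fin 8) : L := -((ε * sg i) • H i)

variable {E F H : Fin 8 → L} (ε : ℤ)

theorem Sys.comm (S : Sys E F H) {i j : Fin 8} (h : cz i j = 0) (m : L) : ⁅E i, ⁅E j, m⁆⁆ = ⁅E j, ⁅E i, m⁆⁆ := by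
  rw [leibniz_lie, S.ee0 i j h, zero_lie, zero_add]

theorem Sys.serre (S : Sys E F H) {i j : Fin 8} (h : cz i j = -1) (m : L) :
    ⁅E i, ⁅E i, ⁅E j, m⁆⁆⁆ + ⁅E j, ⁅E i, ⁅E i, m⁆⁆⁆ = (2 : ℂ) • ⁅E i, ⁅E j, ⁅E i, m⁆⁆⁆ := by
  have h1 := S.ee1 i j h
  have h2 : ⁅⁅E i, ⁅E i, E j⁆⁆, m⁆ = 0 := by rw [h1, zero_lie]
  simp only [lie_lie, lie_sub] at h2
  rw [two_smul]
  have h3 : ⁅E i, ⁅E i, ⁅E j, m⁆⁆⁆ + ⁅E j, ⁅E i, ⁅E i, m⁆⁆⁆ -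
    (⁅E i, ⁅E j, ⁅E i, m⁆⁆⁆ + ⁅E i, ⁅E j, ⁅E i, m⁆⁆⁆) = 0 := by
    rw [← h2]; abel
  exact sub_eq_zero.1 h3

theorem Sys.EY (S : Sys E F H) (k : ℕ) : ∀ i : Fin 8, ⁅E i, Y E ε k⁆ = Y E ε (up i k) := by
  induction k using Nat.strong_induction_on with
  | _ k ih =>
  intro i
  have Z : Y E ε 255 = 0 := Y_big E ε (by norm_num)
  rcases Nat.lt_or_ge k 120 with hk | hk
  swap
  · rw [Y_big E ε hk, lie_zero, up, if_neg (by omega), Z]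
  rcases Nat.lt_or_ge k 8 with h8 | h8
  · obtain ⟨ha, hb, -, -⟩ := chk_up_simple k h8 i i.2
    rw [Y_simple' E ε k h8, lie_smul]
    by_cases h1 : cz i k = -1
    · obtain ⟨hg8, hg, hp⟩ := ha h1
      rw [Y_step E ε hg8 hg]
      rcases hp with ⟨h2, h3⟩ | ⟨h2, h3⟩
      · rw [h3, Fin.ext h2, Y_simple' E ε k h8, lie_smul]
      · have : pj (up i k) = ⟨k, h8⟩ := Fin.ext h2
        rw [h3, this, Y_simple, lie_smul, chk_sg i i.2 k h8 h1, ← lie_skew, smul_neg, mul_neg,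
          neg_smul]
    · rw [hb h1, Z]
      rcases chk_cz_cases i i.2 k h8 with h2 | h2 | h2
      · have : i = ⟨k, h8⟩ := Fin.ext h2
        rw [this, lie_self, smul_zero]
      · rw [S.ee0 i ⟨k, h8⟩ h2, smul_zero]
      · exact absurd h2 h1
  · obtain ⟨ha, hb⟩ := chk_up k hk h8 i i.2
    by_cases h1 : up i k = 255
    swap
    · obtain ⟨hg8, hg, hp⟩ := ha h1
      rw [Y_step E ε hg8 hg]
      rcases hp with ⟨h2, h3⟩ | ⟨h2, h3, h4, h5⟩
      · rw [h3, Fin.ext h2]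
      · have e1 := ih _ h2 (pj (up i k))
        have e2 := ih _ h2 i
        rw [h3] at e1
        rw [h4] at e2
        rw [← e1, ← e2, S.comm h5]
    · obtain ⟨j', hj', hlt, hup, hr⟩ := hb h1
      rw [h1, Z]
      obtain ⟨j, rfl⟩ : ∃ j : Fin 8, (j : ℕ) = j' := ⟨⟨j', hj'⟩, rfl⟩
      have e1 := ih _ hlt j
      rw [hup] at e1
      have eδ := ih _ hlt i
      rcases hr with ⟨h2, h3⟩ | ⟨h2, h3, h4⟩ | ⟨h2, m', hm', h3, h4, h5⟩ | ⟨h2, h3, h4, h5, h6⟩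
      · rw [← e1, S.comm h2, eδ, h3, Z, lie_zero]
      · have hij : j = i := Fin.ext h2
        subst hij
        rw [← e1, Y_simple' E ε _ h3, lie_smul, lie_smul, S.ee1 j ⟨_, h3⟩ h4, smul_zero]
      · have hij : j = i := Fin.ext h2
        subst hij
        obtain ⟨m, rfl⟩ : ∃ m : Fin 8, (m : ℕ) = m' := ⟨⟨m', hm'⟩, rfl⟩
        have f1 := ih _ (h3.trans hlt) m
        have f2 := ih _ (h3.trans hlt) j
        rw [h4] at f1
        rw [← e1, ← f1]
        rcases h5 with ⟨g1, g2, g3⟩ | ⟨g1, g2⟩ | ⟨g1, g2⟩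
        · rw [S.comm g1, S.comm g1, f2, ih _ g2 j, g3, Z, lie_zero]
        · rw [S.comm g1, S.comm g1, f2, g2, Z, lie_zero, lie_zero]
        · have := S.serre g1 (Y E ε (dn m (dn j k)))
          rw [f2, g2, Z] at this
          simpa using this
      · have f1 := ih _ (h3.trans hlt) i
        have f2 := ih _ (h3.trans hlt) j
        rw [h4] at f1
        have := S.serre h2 (Y E ε (dn i (dn j k)))
        rw [f1, f2, h5, Z, eδ, h6, Z, e1] at this
        simpa using this.symm

theorem Sys.HY (S : Sys E F H) {k : ℕ} (hk : k < 120) (i : Fin 8) : ⁅H i, Y E ε k⁆ = wtp i k • Y E ε k := by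
  induction k using Nat.strong_induction_on with
  | _ k ih =>
  rcases Nat.lt_or_ge k 8 with h8 | h8
  · rw [Y_simple' E ε k h8, lie_smul, S.he, (chk_up_simple k h8 i i.2).2.2.2, smul_comm]
  · have hp := (chk_par k hk h8).1
    rw [Y_step E ε h8 hk, leibniz_lie, S.he, ih _ hp (hp.trans hk), smul_lie, lie_smul,
      chk_wt k hk h8 i i.2, add_smul]

theorem Sys.EU (S : Sys E F H) (i j : Fin 8) : ⁅E j, U H ε i⁆ = (ε * sg i * cz i j) • E j := by
  rw [U, lie_neg, lie_smul, ← lie_skew, S.he, smul_neg, neg_neg, smul_smul]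

theorem Sys.FY (S : Sys E F H) {k : ℕ} (hk : k < 120) (i : Fin 8) :
    ⁅F i, Y E ε k⁆ = if k = i then U H ε i else Y E ε (dn i k) := by
  have Z : Y E ε 255 = 0 := Y_big E ε (by norm_num)
  induction k using Nat.strong_induction_on with
  | _ k ih =>
  rcases Nat.lt_or_ge k 8 with h8 | h8
  · rw [Y_simple' E ε k h8, lie_smul, (chk_up_simple k h8 i i.2).2.2.1, Z]
    split_ifs with h
    · have : i = ⟨k, h8⟩ := Fin.ext h.symm
      subst this
      rw [← lie_skew, S.ef_same, U, smul_neg]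
    · rw [← lie_skew, S.ef_ne _ _ (fun h' => h (by rw [← h'])), neg_zero, smul_zero]
  · obtain ⟨hp, hp1, hp2, hp3⟩ := chk_par k hk h8
    rw [if_neg (by omega), Y_step E ε h8 hk, leibniz_lie, ih _ hp (hp.trans hk)]
    by_cases hij : i = pj k
    · rw [hij, ← lie_skew (F (pj k)) (E (pj k)), S.ef_same, neg_lie, S.HY ε (hp.trans hk), hp3, if_neg hp1, hp2, Z,
        lie_zero]
      simp [pp]
    · rw [← lie_skew (F i) (E (pj k)), S.ef_ne _ _ (Ne.symm hij), neg_zero, zero_lie, zero_add]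
      obtain ⟨ha, hb⟩ := chk_dn k hk h8 i i.2 (fun h => hij (Fin.ext h))
      split_ifs with h
      · rw [(ha h).1, Y_simple, S.EU, (ha h).2, chk_sg i i.2 (pj k) (pj k).2 (ha h).2]
        congr 1; ring
      · rw [S.EY, (hb h).1]

end System

/-- Action of the `i`-th raising operator on indices of basis vectors. -/
def actE (i k : ℕ) : ℕ :=
  if k < 120 then up i k else
  if k < 240 then
    (if k - 120 = i then 240 + i else if dn i (k - 120) = 255 then 255 else dn i (k - 120) + 120)
  else if k < 248 then i else 255

/-- The Chevalley involution on indices. -/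
def swp (k : ℕ) : ℕ := if k < 120 then k + 120 else if k < 240 then k - 120 else k

/-- Action of the `i`-th lowering operator on indices of basis vectors. -/
def actF (i k : ℕ) : ℕ := swp (actE i (swp k))

/-- Coefficients of the raising and lowering operators. -/
def cf (i k : ℕ) : ℤ := if k < 240 then 1 else |cz (k - 240) i|

/-- Weights of the basis vectors. -/
def wt (i k : ℕ) : ℤ :=
  if k < 120 then wtp i k else if k < 240 then - wtp i (k - 120) else 0

theorem chk_range : ∀ i < 8, ∀ k < 120, (up i k < 120 ∨ up i k = 255) ∧
    (dn i k < 120 ∨ dn i k = 255) := by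
  decide +kernel

theorem chk_abs : ∀ i < 8, ∀ j < 8, sg i * cz i j = |cz i j| * sg j := by
  decide +kernel

section Full

variable {L : Type*} [LieRing L] [LieAlgebra ℂ L]

/-- The full family of basis vectors. -/
noncomputable def X (E F H : Fin 8 → L) (k : ℕ) : L :=
  if k < 120 then Y E 1 k else if k < 240 then Y F (-1) (k - 120) else
  if h : k - 240 < 8 then U H 1 ⟨k - 240, h⟩ else 0

variable {E F H : Fin 8 → L}

theorem X_pos {k : ℕ} (h : k < 120) : X E F H k = Y E 1 k := by rw [X, if_pos h]

theorem X_neg {k : ℕ} (h : k < 120) : X E F H (k + 120) = Y F (-1) k := by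
  rw [X, if_neg (by omega), if_pos (by omega), Nat.add_sub_cancel]

theorem X_zero (i : Fin 8) : X E F H (240 + i) = U H 1 i := by
  have := i.2
  rw [X, if_neg (by omega), if_neg (by omega), dif_pos (by omega)]
  have h : (⟨240 + (i : ℕ) - 240, by omega⟩ : Fin 8) = i := Fin.ext (Nat.add_sub_cancel_left _ _)
  rw [h]

theorem X_big {k : ℕ} (h : 248 ≤ k) : X E F H k = 0 := by
  rw [X, if_neg (by omega), if_neg (by omega), dif_neg (by omega)]


theorem Sys.EX (S : Sys E F H) (i : Fin 8) (k : ℕ) : ⁅E i, X E F H k⁆ = cf i k • X E F H (actE i k) := by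
  rcases Nat.lt_or_ge k 120 with h | h
  · rw [cf, if_pos (by omega), one_smul, X_pos h, S.EY, actE, if_pos h]
    rcases (chk_range i i.2 k h).1 with h1 | h1
    · rw [X_pos h1]
    · rw [h1, X_big (by omega), Y_big _ _ (by omega)]
  rcases Nat.lt_or_ge k 240 with h' | h'
  · obtain ⟨k, rfl⟩ : ∃ m, k = m + 120 := ⟨k - 120, by omega⟩
    have hk : k < 120 := by omega
    have hact : actE i (k + 120) =
        if k = (i : ℕ) then 240 + (i : ℕ) else if dn i k = 255 then 255 else dn i k + 120 := by
      rw [actE, if_neg (by omega), if_pos h', Nat.add_sub_cancel]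
    rw [cf, if_pos (by omega), one_smul, X_neg hk, S.swap.FY _ hk, hact]
    split_ifs with h1 h2
    · rw [X_zero, U, U, smul_neg, neg_neg, neg_one_mul, neg_smul, one_mul]
    · rw [h2, X_big (by omega), Y_big _ _ (by omega)]
    · rw [X_neg]
      exact (chk_range i i.2 k hk).2.resolve_right h2
  rcases Nat.lt_or_ge k 248 with h'' | h''
  · obtain ⟨j, rfl⟩ : ∃ j : Fin 8, k = 240 + j := ⟨⟨k - 240, by omega⟩, by simp; omega⟩
    have hi := i.2
    rw [X_zero, S.EU, cf, if_neg (by omega), actE, if_neg (by omega), if_neg (by omega),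
      if_pos h'', X_pos (by omega), Y_simple, smul_smul, Nat.add_sub_cancel_left, one_mul, one_mul,
      chk_abs j j.2 i i.2]
  · rw [X_big h'', lie_zero, actE, if_neg (by omega), if_neg (by omega), if_neg (by omega),
      X_big (by omega), smul_zero]

theorem Sys.HX (S : Sys E F H) (i : Fin 8) (k : ℕ) : ⁅H i, X E F H k⁆ = wt i k • X E F H k := by
  rcases Nat.lt_or_ge k 120 with h | h
  · rw [X_pos h, S.HY _ h, wt, if_pos h]
  rcases Nat.lt_or_ge k 240 with h' | h'
  · obtain ⟨k, rfl⟩ : ∃ m, k = m + 120 := ⟨k - 120, by omega⟩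
    have hk : k < 120 := by omega
    have := S.swap.HY (-1) hk i
    rw [X_neg hk, wt, if_neg (by omega), if_pos h', Nat.add_sub_cancel, neg_smul, ← this, neg_lie,
      neg_neg]
  rcases Nat.lt_or_ge k 248 with h'' | h''
  · obtain ⟨j, rfl⟩ : ∃ j : Fin 8, k = 240 + j := ⟨⟨k - 240, by omega⟩, by simp; omega⟩
    rw [X_zero, wt, if_neg (by omega), if_neg (by omega), U, lie_neg, lie_smul, S.hh]
    simp
  · rw [X_big h'', lie_zero, smul_zero]

end Full

section Full2

variable {L : Type*} [LieRing L] [LieAlgebra ℂ L] {E F H : Fin 8 → L}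

theorem Y_neg (E : Fin 8 → L) (k : ℕ) : Y E (-1) k = - Y E 1 k := by
  induction k using Nat.strong_induction_on with
  | _ k ih =>
  rcases Nat.lt_or_ge k 8 with h8 | h8
  · rw [Y_simple' _ _ _ h8, Y_simple' _ _ _ h8]; simp
  rcases Nat.lt_or_ge k 120 with h | h
  · rw [Y_step _ _ h8 h, Y_step _ _ h8 h, ih _ (chk_par k h h8).1, lie_neg]
  · rw [Y_big _ _ h, Y_big _ _ h, neg_zero]

theorem X_swap (k : ℕ) (hk : k < 240) : X F E (fun i => - H i) k = - X E F H (swp k) := by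
  rcases Nat.lt_or_ge k 120 with h | h
  · rw [X_pos h, swp, if_pos h, X_neg h, Y_neg, neg_neg]
  · obtain ⟨k, rfl⟩ : ∃ m, k = m + 120 := ⟨k - 120, by omega⟩
    have hk : k < 120 := by omega
    rw [X_neg hk, Y_neg, swp, if_neg (by omega), if_pos (by omega), Nat.add_sub_cancel, X_pos hk]

theorem X_swap' (k : ℕ) : X F E (fun i => - H i) k = - X E F H (swp k) := by
  rcases Nat.lt_or_ge k 240 with h | h
  · exact X_swap k h
  rcases Nat.lt_or_ge k 248 with h'' | h''
  · obtain ⟨j, rfl⟩ : ∃ j : Fin 8, k = 240 + j := ⟨⟨k - 240, by omega⟩, by simp; omega⟩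
    have hs : swp (240 + j) = 240 + j := by
      unfold swp
      rw [if_neg (by omega), if_neg (by omega)]
    rw [hs, X_zero, X_zero]
    exact congrArg Neg.neg (smul_neg _ _)
  · rw [X_big h'', swp, if_neg (by omega), if_neg (by omega), X_big h'', neg_zero]

theorem swp_swp (k : ℕ) : swp (swp k) = k := by
  unfold swp; split_ifs <;> omega

theorem cf_swp (i k : ℕ) : cf i (swp k) = cf i k := by
  have h1 : swp k < 240 ↔ k < 240 := by unfold swp; split_ifs <;> omega
  by_cases h : k < 240
  · rw [cf, if_pos (h1.2 h), cf, if_pos h]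
  · have h2 : swp k = k := by unfold swp; split_ifs <;> omega
    rw [h2]

theorem Sys.FX (S : Sys E F H) (i : Fin 8) (k : ℕ) :
    ⁅F i, X E F H k⁆ = cf i k • X E F H (actF i k) := by
  have := S.swap.EX i (swp k)
  rw [X_swap', X_swap', swp_swp, cf_swp, lie_neg, smul_neg, neg_inj] at this
  exact this

end Full2

end E8Model

end

section

namespace E8Model

section Lists

variable {M : Type*} [AddCommGroup M]

/-- The linear combination of the vectors `b k` encoded by a list of pairs. -/
def val (b : ℕ → M) (l : List (ℤ × ℕ)) : M := (l.map fun p => p.1 • b p.2).sum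

/-- The coefficient of index `n` in a list. -/
def coefAt (l : List (ℤ × ℕ)) (n : ℕ) : ℤ := (l.map fun p => if p.2 = n then p.1 else 0).sum

/-- The list encodes the zero vector. -/
def isZ (l : List (ℤ × ℕ)) : Bool := l.all fun p => decide (248 ≤ p.2) || decide (coefAt l p.2 = 0)

/-- Scalar multiple of a list. -/
def scl (c : ℤ) (l : List (ℤ × ℕ)) : List (ℤ × ℕ) := l.map fun p => (c * p.1, p.2)

/-- Apply an operator sending `b k` to `c k • b (a k)`. -/
def lmap (c : ℕ → ℤ) (a : ℕ → ℕ) : List (ℤ × ℕ) → List (ℤ × ℕ)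
  | [] => []
  | p :: l => if 248 ≤ a p.2 ∨ c p.2 = 0 then lmap c a l else (c p.2 * p.1, a p.2) :: lmap c a l

variable (b : ℕ → M)

@[simp] theorem val_nil : val b [] = 0 := rfl

@[simp] theorem val_cons (p : ℤ × ℕ) (l : List (ℤ × ℕ)) :
    val b (p :: l) = p.1 • b p.2 + val b l := by simp [val]

theorem val_append (l m : List (ℤ × ℕ)) : val b (l ++ m) = val b l + val b m := by simp [val]

theorem val_scl (c : ℤ) (l : List (ℤ × ℕ)) : val b (scl c l) = c • val b l := by
  induction l with
  | nil => simp [scl]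
  | cons p l ih =>
    have : scl c (p :: l) = (c * p.1, p.2) :: scl c l := rfl
    rw [this, val_cons, val_cons, ih, smul_add, smul_smul]

variable {b}

theorem val_lmap (hb : ∀ n, 248 ≤ n → b n = 0) (c : ℕ → ℤ) (a : ℕ → ℕ) (T : M →+ M) (hT : ∀ k, T (b k) = c k • b (a k))
    (l : List (ℤ × ℕ)) : T (val b l) = val b (lmap c a l) := by
  induction l with
  | nil => simp [lmap]
  | cons p l ih =>
    rw [val_cons, map_add, map_zsmul, hT, lmap, ih]
    split_ifs with h
    · rcases h with h | h
      · rw [hb _ h]; simp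
      · rw [h]; simp
    · rw [val_cons, smul_smul, mul_comm]

theorem val_eq_sum (hb : ∀ n, 248 ≤ n → b n = 0) (l : List (ℤ × ℕ)) : val b l = ∑ n : Fin 248, coefAt l n • b n := by
  induction l with
  | nil => simp [coefAt]
  | cons p l ih =>
    have h1 : ∀ n, coefAt (p :: l) n = (if p.2 = n then p.1 else 0) + coefAt l n := fun n => by
      simp [coefAt]
    simp only [h1, add_smul, Finset.sum_add_distrib]
    rw [val_cons, ih]
    congr 1
    rcases Nat.lt_or_ge p.2 248 with h | h
    · rw [Finset.sum_eq_single (⟨p.2, h⟩ : Fin 248)]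
      · rw [if_pos rfl]
      · intro n _ hn
        rw [if_neg, zero_smul]
        exact fun h' => hn (Fin.ext h'.symm)
      · simp
    · rw [hb _ h, smul_zero, Finset.sum_eq_zero]
      intro n _
      rw [if_neg, zero_smul]
      have := n.2
      omega

theorem val_isZ (hb : ∀ n, 248 ≤ n → b n = 0) (l : List (ℤ × ℕ)) (h : isZ l = true) : val b l = 0 := by
  rw [val_eq_sum hb, Finset.sum_eq_zero]
  intro n _
  by_cases hn : ∃ p ∈ l, p.2 = n
  · obtain ⟨p, hp, hpn⟩ := hn
    have := List.all_eq_true.1 h p hp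
    rw [hpn] at this
    simp only [Bool.or_eq_true, decide_eq_true_eq] at this
    rcases this with h1 | h1
    · have := n.2
      omega
    · rw [h1, zero_smul]
  · have : coefAt l n = 0 := by
      apply List.sum_eq_zero
      intro x hx
      obtain ⟨p, hp, rfl⟩ := List.mem_map.1 hx
      rw [if_neg (fun h => hn ⟨p, hp, h⟩)]
    rw [this, zero_smul]

end Lists

/-- Raising operators on lists. -/
def vE (i : ℕ) : List (ℤ × ℕ) → List (ℤ × ℕ) := lmap (cf i) (actE i)

/-- Lowering operators on lists. -/
def vF (i : ℕ) : List (ℤ × ℕ) → List (ℤ × ℕ) := lmap (cf i) (actF i)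

/-- Cartan operators on lists. -/
def vH (i : ℕ) : List (ℤ × ℕ) → List (ℤ × ℕ) := lmap (wt i) (fun k => k)

theorem chk_actE_big : ∀ i k, 248 ≤ k → actE i k = 255 := by
  intro i k h
  rw [actE, if_neg (by omega), if_neg (by omega), if_neg (by omega)]

theorem chk_actF_big : ∀ i k, 248 ≤ k → actF i k = 255 := by
  intro i k h
  have h1 : swp k = k := by rw [swp, if_neg (by omega), if_neg (by omega)]
  rw [actF, h1, chk_actE_big i k h, swp, if_neg (by omega), if_neg (by omega)]

theorem wt_big : ∀ i k, 248 ≤ k → wt i k = 0 := by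
  intro i k h
  rw [wt, if_neg (by omega), if_neg (by omega)]

theorem chk_ef : ∀ i < 8, ∀ k < 248,
    isZ (vE i (vF i [(1, k)]) ++ scl (-1) (vF i (vE i [(1, k)])) ++
      scl (-1) (vH i [(1, k)])) = true := by
  decide +kernel

theorem chk_ef_ne : ∀ i < 8, ∀ j < 8, i ≠ j → ∀ k < 248,
    isZ (vE i (vF j [(1, k)]) ++ scl (-1) (vF j (vE i [(1, k)]))) = true := by
  decide +kernel

theorem chk_wE : ∀ i < 8, ∀ j < 8, ∀ k < 248,
    248 ≤ actE j k ∨ cf j k = 0 ∨ wt i (actE j k) = wt i k + cz i j := by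
  decide +kernel

theorem swp_lt {k n : ℕ} (hn : 240 ≤ n) : swp k < n ↔ k < n := by
  unfold swp; split_ifs <;> omega

theorem wt_swp (i k : ℕ) : wt i (swp k) = - wt i k := by
  unfold swp wt
  split_ifs <;> first | omega | simp

theorem chk_wF (i : ℕ) (hi : i < 8) (j : ℕ) (hj : j < 8) (k : ℕ) (hk : k < 248) :
    248 ≤ actF j k ∨ cf j k = 0 ∨ wt i (actF j k) = wt i k - cz i j := by
  have h := chk_wE i hi j hj (swp k) ((swp_lt (by norm_num)).2 hk)
  rw [cf_swp, wt_swp] at h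
  rcases h with h | h | h
  · left
    have := @swp_lt (actE j (swp k)) 248 (by norm_num)
    unfold actF
    omega
  · exact Or.inr (Or.inl h)
  · right; right
    rw [actF, wt_swp, h]
    ring

theorem chk_ee0 : ∀ i < 8, ∀ j < 8, cz i j = 0 → ∀ k < 248,
    isZ (vE i (vE j [(1, k)]) ++ scl (-1) (vE j (vE i [(1, k)]))) = true := by
  decide +kernel

theorem chk_ff0 : ∀ i < 8, ∀ j < 8, cz i j = 0 → ∀ k < 248,
    isZ (vF i (vF j [(1, k)]) ++ scl (-1) (vF j (vF i [(1, k)]))) = true := by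
  decide +kernel

theorem chk_ee1 : ∀ i < 8, ∀ j < 8, cz i j = -1 → ∀ k < 248,
    isZ (vE i (vE i (vE j [(1, k)])) ++ scl (-2) (vE i (vE j (vE i [(1, k)]))) ++
      vE j (vE i (vE i [(1, k)]))) = true := by
  decide +kernel

theorem chk_ff1 : ∀ i < 8, ∀ j < 8, cz i j = -1 → ∀ k < 248,
    isZ (vF i (vF i (vF j [(1, k)])) ++ scl (-2) (vF i (vF j (vF i [(1, k)]))) ++
      vF j (vF i (vF i [(1, k)]))) = true := by
  decide +kernel

end E8Model

end

section

namespace E8Model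

section Model

attribute [local instance] LieRing.ofAssociativeRing


/-- The underlying space of the adjoint representation. -/
abbrev V := Fin 248 → ℂ

/-- The standard basis, extended by zero. -/
noncomputable def Bv (n : ℕ) : V := if h : n < 248 then Pi.single ⟨n, h⟩ 1 else 0

theorem Bv_big (n : ℕ) (h : 248 ≤ n) : Bv n = 0 := by rw [Bv, dif_neg (by omega)]

theorem Bv_fin (k : Fin 248) : Bv k = Pi.basisFun ℂ (Fin 248) k := by
  rw [Bv, dif_pos k.2, Pi.basisFun_apply]

/-- The operator sending `Bv k` to `c k • Bv (a k)`. -/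
noncomputable def op (c : ℕ → ℤ) (a : ℕ → ℕ) : Module.End ℂ V :=
  (Pi.basisFun ℂ (Fin 248)).constr ℂ (fun k => c k • Bv (a k))

theorem op_Bv (c : ℕ → ℤ) (a : ℕ → ℕ) (h : ∀ k, 248 ≤ k → c k = 0 ∨ 248 ≤ a k) (k : ℕ) :
    op c a (Bv k) = c k • Bv (a k) := by
  rcases Nat.lt_or_ge k 248 with hk | hk
  · have := Bv_fin ⟨k, hk⟩
    rw [show Bv k = _ from this, op, Module.Basis.constr_basis]
  · rw [Bv_big k hk, map_zero]
    rcases h k hk with h | h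
    · rw [h, zero_smul]
    · rw [Bv_big _ h, smul_zero]

theorem op_val (c : ℕ → ℤ) (a : ℕ → ℕ) (h : ∀ k, 248 ≤ k → c k = 0 ∨ 248 ≤ a k)
    (l : List (ℤ × ℕ)) : op c a (val Bv l) = val Bv (lmap c a l) :=
  val_lmap Bv_big c a (op c a).toAddMonoidHom (op_Bv c a h) l

/-- Raising operators. -/
noncomputable def opE (i : Fin 8) : Module.End ℂ V := op (cf i) (actE i)
/-- Lowering operators. -/
noncomputable def opF (i : Fin 8) : Module.End ℂ V := op (cf i) (actF i)
/-- Cartan operators. -/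
noncomputable def opH (i : Fin 8) : Module.End ℂ V := op (wt i) (fun k => k)

theorem opE_val (i : Fin 8) (l : List (ℤ × ℕ)) : opE i (val Bv l) = val Bv (vE i l) :=
  op_val _ _ (fun _ hk => Or.inr (by rw [chk_actE_big _ _ hk]; norm_num)) l
theorem opF_val (i : Fin 8) (l : List (ℤ × ℕ)) : opF i (val Bv l) = val Bv (vF i l) :=
  op_val _ _ (fun _ hk => Or.inr (by rw [chk_actF_big _ _ hk]; norm_num)) l
theorem opH_val (i : Fin 8) (l : List (ℤ × ℕ)) : opH i (val Bv l) = val Bv (vH i l) :=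
  op_val _ _ (fun _ hk => Or.inl (wt_big _ _ hk)) l

theorem opE_Bv (i : Fin 8) (k : ℕ) : opE i (Bv k) = cf i k • Bv (actE i k) :=
  op_Bv _ _ (fun _ hk => Or.inr (by rw [chk_actE_big _ _ hk]; norm_num)) k
theorem opF_Bv (i : Fin 8) (k : ℕ) : opF i (Bv k) = cf i k • Bv (actF i k) :=
  op_Bv _ _ (fun _ hk => Or.inr (by rw [chk_actF_big _ _ hk]; norm_num)) k
theorem opH_Bv (i : Fin 8) (k : ℕ) : opH i (Bv k) = wt i k • Bv k :=
  op_Bv _ _ (fun _ hk => Or.inl (wt_big _ _ hk)) k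

theorem op_ext {S T : Module.End ℂ V} (h : ∀ k < 248, S (val Bv [(1, k)]) - T (val Bv [(1, k)]) = 0) :
    S = T := by
  apply (Pi.basisFun ℂ (Fin 248)).ext
  intro k
  have := h k k.2
  rw [← Bv_fin]
  simpa [sub_eq_zero] using this

theorem val_Z {l : List (ℤ × ℕ)} (h : isZ l = true) {v : V} (hv : v = val Bv l) : v = 0 := by
  rw [hv, val_isZ Bv_big l h]

theorem lie_end_apply (S T : Module.End ℂ V) (v : V) : ⁅S, T⁆ v = S (T v) - T (S v) := rfl

theorem model_sys : Sys opE opF opH where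
  hh i j := by
    apply op_ext
    intro k hk
    have h1 : ∀ i : Fin 8, opH i (Bv k) = wt i k • Bv k :=
      fun i => op_Bv _ _ (fun _ hk => Or.inl (wt_big _ _ hk)) k
    simp only [val_cons, val_nil, add_zero, one_smul, LinearMap.zero_apply, sub_zero,
      lie_end_apply, h1, map_zsmul]
    rw [smul_comm, sub_self]
  ef_same i := by
    apply op_ext
    intro k hk
    refine val_Z (chk_ef i i.2 k hk) ?_
    rw [lie_end_apply, opE_val, opF_val, opE_val, opF_val, opH_val, val_append, val_append,
      val_scl, val_scl]
    simp only [neg_smul, one_smul]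
    abel
  ef_ne i j hij := by
    apply op_ext
    intro k hk
    refine val_Z (chk_ef_ne i i.2 j j.2 (fun h => hij (Fin.ext h)) k hk) ?_
    rw [lie_end_apply, opE_val, opF_val, opE_val, opF_val, val_append,
      val_scl, LinearMap.zero_apply]
    simp only [neg_smul, one_smul, zero_smul]
    abel
  he i j := by
    apply op_ext
    intro k hk
    simp only [val_cons, val_nil, add_zero, one_smul, lie_end_apply, LinearMap.smul_apply, opE_Bv,
      opH_Bv, map_zsmul]
    rcases chk_wE i i.2 j j.2 k hk with h | h | h
    · simp [Bv_big _ h]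
    · simp [h]
    · rw [h]
      module
  hf i j := by
    apply op_ext
    intro k hk
    simp only [val_cons, val_nil, add_zero, one_smul, lie_end_apply, LinearMap.smul_apply, opF_Bv,
      opH_Bv, map_zsmul, LinearMap.neg_apply]
    rcases chk_wF i i.2 j j.2 k hk with h | h | h
    · simp [Bv_big _ h]
    · simp [h]
    · rw [h]
      module
  ee0 i j h := by
    apply op_ext
    intro k hk
    refine val_Z (chk_ee0 i i.2 j j.2 h k hk) ?_
    rw [lie_end_apply, opE_val, opE_val, opE_val, opE_val, LinearMap.zero_apply, val_append,
      val_scl]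
    simp only [neg_smul, one_smul]
    abel
  ff0 i j h := by
    apply op_ext
    intro k hk
    refine val_Z (chk_ff0 i i.2 j j.2 h k hk) ?_
    rw [lie_end_apply, opF_val, opF_val, opF_val, opF_val, LinearMap.zero_apply, val_append,
      val_scl]
    simp only [neg_smul, one_smul]
    abel
  ee1 i j h := by
    apply op_ext
    intro k hk
    refine val_Z (chk_ee1 i i.2 j j.2 h k hk) ?_
    simp only [lie_end_apply, map_sub, opE_val, LinearMap.zero_apply, val_append,
      val_scl, neg_smul, ofNat_smul_eq_nsmul, two_nsmul]
    abel
  ff1 i j h := by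
    apply op_ext
    intro k hk
    refine val_Z (chk_ff1 i i.2 j j.2 h k hk) ?_
    simp only [lie_end_apply, map_sub, opF_val, LinearMap.zero_apply, val_append,
      val_scl, neg_smul, ofNat_smul_eq_nsmul, two_nsmul]
    abel

theorem opE_ne (i : Fin 8) : opE i ≠ 0 := by
  intro h
  have h1 := op_Bv (cf i) (actE i)
    (fun _ hk => Or.inr (by rw [chk_actE_big _ _ hk]; norm_num)) (240 + i)
  have hi := i.2
  have h2 : cf i (240 + i) = 2 := by
    rw [cf, if_neg (by omega), Nat.add_sub_cancel_left, cz, if_pos rfl]; rfl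
  have h3 : actE i (240 + i) = i := by
    rw [actE, if_neg (by omega), if_neg (by omega), if_pos (by omega)]
  rw [show op (cf i) (actE i) = 0 from h, h2, h3, LinearMap.zero_apply, Bv,
    dif_pos (by omega)] at h1
  have h4 := congrFun h1 ⟨i, by omega⟩
  simp at h4

end Model

end E8Model

end

section

namespace E8Model

/-- Eigenvalues of a linear combination of the Cartan elements. -/
def ev (c : Fin 8 → ℤ) (k : ℕ) : ℤ :=
  c 0 * wt 0 k + c 1 * wt 1 k + c 2 * wt 2 k + c 3 * wt 3 k + c 4 * wt 4 k + c 5 * wt 5 k +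
    c 6 * wt 6 k + c 7 * wt 7 k

/-- Coefficients of a regular element. -/
def creg : Fin 8 → ℤ := ![156, 506, 24, 256, 214, 997, 511, 612]

/-- Decoding table: byte `v` is the index of the root on which the regular element has value `v`
modulo 1000. -/
def decT : ℕ := 1737662031642560811045644707107323319754487175054868993351513139010589436125018202997344251813785012252477962184287439039530801687811711198092030815321660808416436534165199528323569010767608824378384866755064744290177047258220815626975482672869779247896398560113869766701959145578225613943753403016955452999345186442002812672848781448608651093949411576724627417189750275318895616345327017212243397266760415836477024567277012197214045346044833667677280146728635764680490058113857577211900339717589605356449373883001616580707860862475533043413834233200710714848210462250897780605540829279273813367109836516289817064112592590869307490748417894262253396221242194356120044714648733336866438711209135581989608831619551407258461080489599798460639379606278018642503035789872619909971556428968997838238150402742740052351584669256037366755855510209017448659296870431397747989891796810170731439332682972516541893884153747062369489887879238470945717553170369042490728944068204482574671633941901340792945444595369255617017841259525044656599406453931461517658412801432628265197012943419088434595890857293500623483719572368717256038795908808717401225690682290459136231212469674822623808476963305530973407681854779643769137235443485228994751522810143362194685779159485426361146999332378956012422498533299499115609101003399644222493520853374175872781178248960966050027903656425262213877481485932921011348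05762728063763795314628011224384159306695611069306588601547394427362273389736065154146126521959651018426510246372663018646250453214849299528609648897952785746669643007168608928817219082947484500454531973963256995865723162067915094813917974238460308622575821877021129139055841142660584561770549432301760269158331698280680437310930524147239265264061240135749246975139590962406304516666761331426285300228600143922325226003422111618314109965589821430632692443069933960944013476665501085491174645680046906109935269318942182428937891910544474621110807545930539040341749941223677835567327376809836937243961421590405327697505646805993279443679882049339354237115037367684390675568864376977208101762755490289523092323362978266381251558345940741124744243154059290017198311071085097954783960151313546571135870246656104293572320200477003590706468240343486391880037421060739075680247645893982503389892405871883879178022476733179638872843951849618980178145809476033078210410392676397644289642951286304427623926454791787899947892506361855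

theorem chk_reg : ∀ k < 240, decT / 256 ^ (ev creg k % 1000).toNat % 256 = k ∧ ev creg k ≠ 0 := by
  decide +kernel

/-- The inverse of the Cartan matrix. -/
def czi : ℕ → List ℤ
  | 0 => [4, 5, 7, 10, 8, 6, 4, 2]
  | 1 => [5, 8, 10, 15, 12, 9, 6, 3]
  | 2 => [7, 10, 14, 20, 16, 12, 8, 4]
  | 3 => [10, 15, 20, 30, 24, 18, 12, 6]
  | 4 => [8, 12, 16, 24, 20, 15, 10, 5]
  | 5 => [6, 9, 12, 18, 15, 12, 8, 4]
  | 6 => [4, 6, 8, 12, 10, 8, 6, 3]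
  | _ => [2, 3, 4, 6, 5, 4, 3, 2]

theorem chk_czi : ∀ i < 8, ∀ j < 8, cz i 0 * (czi j).getD 0 0 + cz i 1 * (czi j).getD 1 0 +
    cz i 2 * (czi j).getD 2 0 + cz i 3 * (czi j).getD 3 0 + cz i 4 * (czi j).getD 4 0 +
    cz i 5 * (czi j).getD 5 0 + cz i 6 * (czi j).getD 6 0 + cz i 7 * (czi j).getD 7 0 =
    if i = j then 1 else 0 := by
  decide +kernel

section Basis

variable {L : Type*} [LieRing L] [LieAlgebra ℂ L] {E F H : Fin 8 → L}

/-- Linear combinations of the Cartan elements. -/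
def tH (H : Fin 8 → L) (c : Fin 8 → ℤ) : L := ∑ i, c i • H i

theorem zsmul_ne {c : ℤ} {v : L} (hc : c ≠ 0) (hv : v ≠ 0) : c • v ≠ 0 := by
  rw [← Int.cast_smul_eq_zsmul ℂ]
  exact smul_ne_zero (Int.cast_ne_zero.2 hc) hv

theorem Sys.tX (S : Sys E F H) (c : Fin 8 → ℤ) (k : ℕ) :
    ⁅tH H c, X E F H k⁆ = ev c k • X E F H k := by
  rw [tH, sum_lie, Fin.sum_univ_eight]
  simp only [smul_lie, S.HX, smul_smul, ← add_smul]
  rfl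

theorem Sys.Y_ne (S : Sys E F H) (hE : ∀ i, E i ≠ 0) (ε : ℤ) (hε : ε ≠ 0) (k : ℕ) (hk : k < 120) :
    Y E ε k ≠ 0 := by
  induction k using Nat.strong_induction_on with
  | _ k ih =>
  rcases Nat.lt_or_ge k 8 with h8 | h8
  · rw [Y_simple' E ε k h8]
    refine zsmul_ne (mul_ne_zero hε ?_) (hE _)
    intro h
    have := chk_sg_sq k h8
    rw [h] at this
    norm_num at this
  · intro h
    have h1 := S.FY ε hk (pj k)
    have h2 := (pj k).2
    obtain ⟨hp, -⟩ := chk_par k hk h8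
    rw [h, lie_zero, if_neg (by omega)] at h1
    exact ih _ hp (hp.trans hk) h1.symm

theorem Sys.H_ne (S : Sys E F H) (hE : ∀ i, E i ≠ 0) (i : Fin 8) : H i ≠ 0 := by
  intro h
  have h1 := S.he i i
  rw [h, zero_lie, cz, if_pos rfl] at h1
  exact zsmul_ne (by norm_num) (hE i) h1.symm

theorem Sys.F_ne (S : Sys E F H) (hE : ∀ i, E i ≠ 0) (i : Fin 8) : F i ≠ 0 := by
  intro h
  have h1 := S.ef_same i
  rw [h, lie_zero] at h1
  exact S.H_ne hE i h1.symm

theorem Sys.X_ne (S : Sys E F H) (hE : ∀ i, E i ≠ 0) (k : ℕ) (hk : k < 240) : X E F H k ≠ 0 := by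
  rcases Nat.lt_or_ge k 120 with h | h
  · rw [X_pos h]
    exact S.Y_ne hE 1 one_ne_zero k h
  · obtain ⟨k, rfl⟩ : ∃ m, k = m + 120 := ⟨k - 120, by omega⟩
    rw [X_neg (by omega)]
    exact S.swap.Y_ne (S.F_ne hE) (-1) (by norm_num) k (by omega)

theorem Sys.li_roots (S : Sys E F H) (hE : ∀ i, E i ≠ 0) :
    LinearIndependent ℂ (fun k : Fin 240 => X E F H k) := by
  refine Module.End.eigenvectors_linearIndependent' (LieAlgebra.ad ℂ L (tH H creg))
    (fun k : Fin 240 => ((ev creg k : ℤ) : ℂ)) ?_ _ ?_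
  · intro k l h
    have h1 : ev creg k = ev creg l := Int.cast_injective h
    have h2 := (chk_reg k k.2).1
    rw [h1, (chk_reg l l.2).1] at h2
    exact Fin.ext h2.symm
  · intro k
    refine ⟨Module.End.mem_eigenspace_iff.2 ?_, S.X_ne hE k k.2⟩
    rw [LieAlgebra.ad_apply, S.tX, Int.cast_smul_eq_zsmul]

theorem Sys.li (S : Sys E F H) (hE : ∀ i, E i ≠ 0) :
    LinearIndependent ℂ (fun k : Fin 248 => X E F H k) := by
  rw [Fintype.linearIndependent_iff]
  intro c hc
  have hsplit : ∀ g : Fin 248 → ℂ, ∑ k, g k • X E F H k =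
      ∑ k : Fin 240, g (Fin.castAdd 8 k) • X E F H k +
      ∑ i : Fin 8, g (Fin.natAdd 240 i) • U H 1 i := by
    intro g
    refine (Fin.sum_univ_add (a := 240) (b := 8) (fun k => g k • X E F H k)).trans ?_
    refine congrArg₂ _ rfl (Finset.sum_congr rfl fun i _ => ?_)
    rw [← X_zero (E := E) (F := F), Fin.val_natAdd]
  have h1 : ∀ k : Fin 240, c (Fin.castAdd 8 k) = 0 := by
    have h2 : ∑ k : Fin 248, (c k * (ev creg k : ℤ)) • X E F H k = 0 := by
      have := congrArg (fun v => ⁅tH H creg, v⁆) hc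
      simp only [lie_sum, lie_smul, S.tX, lie_zero] at this
      rw [← this]
      refine Finset.sum_congr rfl fun k _ => ?_
      rw [mul_smul, Int.cast_smul_eq_zsmul]
    rw [hsplit, Finset.sum_eq_zero (s := (Finset.univ : Finset (Fin 8))), add_zero] at h2
    · intro k
      have h3 := Fintype.linearIndependent_iff.1 (S.li_roots hE) _ h2 k
      have h4 := (chk_reg k k.2).2
      rcases mul_eq_zero.1 h3 with h5 | h5
      · exact h5
      · exact absurd (by exact_mod_cast h5) h4
    · intro i _
      have : ev creg (Fin.natAdd 240 i) = 0 := by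
        have h6 : ∀ j, wt j (240 + i) = 0 := fun j => by
          rw [wt, if_neg (by omega), if_neg (by omega)]
        rw [Fin.val_natAdd, ev]
        simp only [h6, mul_zero, add_zero]
      rw [this, Int.cast_zero, mul_zero, zero_smul]
  rw [hsplit, Finset.sum_eq_zero (fun k _ => by rw [h1 k, zero_smul]), zero_add] at hc
  have h2 : ∀ i : Fin 8, c (Fin.natAdd 240 i) = 0 := by
    have h3 : ∀ j : Fin 8, ∑ i : Fin 8, c (Fin.natAdd 240 i) * (sg i * cz i j : ℤ) = 0 := by
      intro j
      have h4 := congrArg (fun v => ⁅E j, v⁆) hc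
      simp only [lie_sum, lie_smul, S.EU, lie_zero, one_mul] at h4
      have h5 : (∑ i : Fin 8, c (Fin.natAdd 240 i) * (sg i * cz i j : ℤ)) • E j = 0 := by
        rw [← h4, Finset.sum_smul]
        refine Finset.sum_congr rfl fun k _ => ?_
        rw [mul_smul, Int.cast_smul_eq_zsmul]
      exact (smul_eq_zero.1 h5).resolve_right (hE j)
    intro l
    have h6 : ∑ j : Fin 8, (∑ i : Fin 8, c (Fin.natAdd 240 i) * (sg i * cz i j : ℤ)) *
        (((czi l).getD j 0 : ℤ) : ℂ) = 0 := Finset.sum_eq_zero fun j _ => by rw [h3 j, zero_mul]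
    have h7 : ∀ i : Fin 8, ∑ j : Fin 8, cz i j * (czi l).getD j 0 = if i = l then 1 else 0 := by
      intro i
      have := chk_czi i i.2 l l.2
      rw [Fin.sum_univ_eight]
      simp only [Fin.ext_iff]
      exact this
    simp only [Finset.sum_mul] at h6
    rw [Finset.sum_comm] at h6
    have h8 : ∀ i : Fin 8, ∑ j : Fin 8, c (Fin.natAdd 240 i) * ((sg i * cz i j : ℤ) : ℂ) *
        (((czi l).getD j 0 : ℤ) : ℂ) = c (Fin.natAdd 240 i) * (sg i : ℤ) * if i = l then 1 else 0 := by
      intro i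
      have h9 : ((∑ j : Fin 8, cz i j * (czi l).getD j 0 : ℤ) : ℂ) = if i = l then 1 else 0 := by
        rw [h7]; split_ifs <;> simp
      rw [← h9, Int.cast_sum, Finset.mul_sum]
      refine Finset.sum_congr rfl fun j _ => ?_
      push_cast
      ring
    simp only [h8, mul_ite, mul_one, mul_zero, Finset.sum_ite_eq', Finset.mem_univ, if_true] at h6
    refine (mul_eq_zero.1 h6).resolve_right ?_
    intro h
    have h10 : sg l = 0 := by exact_mod_cast h
    have := chk_sg_sq l l.2
    rw [h10] at this
    norm_num at this
  intro k
  rcases Nat.lt_or_ge k 240 with h | h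
  · exact h1 ⟨k, h⟩
  · have h3 := h2 ⟨k - 240, by omega⟩
    have h4 : Fin.natAdd 240 (⟨k - 240, by omega⟩ : Fin 8) = k := Fin.ext (by
      rw [Fin.val_natAdd]
      exact Nat.add_sub_of_le h)
    rw [← h4]
    exact h3

/-- `L` is generated by the `E i` and `F i`. -/
def Gen (E F : Fin 8 → L) : Prop :=
  ∀ N : LieSubalgebra ℂ L, (∀ i, E i ∈ N) → (∀ i, F i ∈ N) → ∀ x, x ∈ N

theorem Sys.span (S : Sys E F H) (hG : Gen E F) :
    ⊤ ≤ Submodule.span ℂ (Set.range (fun k : Fin 248 => X E F H k)) := by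
  set W := Submodule.span ℂ (Set.range (fun k : Fin 248 => X E F H k)) with hW
  have hX : ∀ k, X E F H k ∈ W := by
    intro k
    rcases Nat.lt_or_ge k 248 with h | h
    · exact Submodule.subset_span ⟨⟨k, h⟩, rfl⟩
    · rw [X_big h]
      exact zero_mem _
  have hz : ∀ (c : ℤ) (v : L), v ∈ W → c • v ∈ W := fun c v hv => by
    rw [← Int.cast_smul_eq_zsmul ℂ]
    exact W.smul_mem _ hv
  have hspan : ∀ x : L, (∀ k, ⁅x, X E F H k⁆ ∈ W) → ∀ w ∈ W, ⁅x, w⁆ ∈ W := by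
    intro x hx w hw
    induction hw using Submodule.span_induction with
    | mem w hw => obtain ⟨k, rfl⟩ := hw; exact hx k
    | zero => rw [lie_zero]; exact zero_mem _
    | add a b _ _ ha hb => rw [lie_add]; exact add_mem ha hb
    | smul c a _ ha => rw [lie_smul]; exact W.smul_mem _ ha
  let N : LieSubalgebra ℂ L :=
    { carrier := {x | ∀ w ∈ W, ⁅x, w⁆ ∈ W}
      add_mem' := fun {a b} ha hb w hw => by rw [add_lie]; exact add_mem (ha w hw) (hb w hw)
      zero_mem' := fun w _ => by rw [zero_lie]; exact zero_mem _
      smul_mem' := fun c a ha w hw => by rw [smul_lie]; exact W.smul_mem _ (ha w hw)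
      lie_mem' := fun {a b} ha hb w hw => by
        rw [lie_lie]; exact sub_mem (ha _ (hb w hw)) (hb _ (ha w hw)) }
  have hN : ∀ x, x ∈ N := hG N
    (fun i => hspan _ fun k => by rw [S.EX]; exact hz _ _ (hX _))
    (fun i => hspan _ fun k => by rw [S.FX]; exact hz _ _ (hX _))
  let N2 : LieSubalgebra ℂ L := { W with lie_mem' := fun {a b} _ hb => hN a b hb }
  have hsg : ∀ i : Fin 8, sg i * sg i = 1 := fun i => chk_sg_sq i i.2
  intro x _
  refine hG N2 (fun i => ?_) (fun i => ?_) x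
  · have h1 := hX i
    rw [X_pos (by omega), Y_simple] at h1
    have h2 := hz (sg i) _ h1
    rwa [smul_smul, one_mul, hsg, one_smul] at h2
  · have h1 := hX (i + 120)
    rw [X_neg (by omega), Y_simple] at h1
    have h2 := hz (- sg i) _ h1
    rwa [smul_smul, neg_one_mul, neg_mul_neg, hsg, one_smul] at h2

/-- The basis of root vectors and Cartan elements. -/
noncomputable def Sys.basis (S : Sys E F H) (hE : ∀ i, E i ≠ 0) (hG : Gen E F) :
    Module.Basis (Fin 248) ℂ L := Module.Basis.mk (S.li hE) (S.span hG)

theorem Sys.basis_apply (S : Sys E F H) (hE : ∀ i, E i ≠ 0) (hG : Gen E F) (k : Fin 248) :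
    S.basis hE hG k = X E F H k := by
  rw [Sys.basis, Module.Basis.mk_apply]

end Basis

end E8Model

end

section

namespace E8Model

/-- The operator `ad e` on lists. -/
def vA (l : List (ℤ × ℕ)) : List (ℤ × ℕ) := vE 0 l ++ vE 2 l ++ vE 3 l ++ vE 5 l

/-- The operator `ad f₁` on lists. -/
def vF1 (l : List (ℤ × ℕ)) : List (ℤ × ℕ) :=
  scl 3 (vF 0 l) ++ scl 4 (vF 2 l) ++ scl 3 (vF 3 l)

/-- A basis of the centralizer: for each vector a distinguished index, its weights with respect
to `t` and `h` and its coordinates. -/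
def KL : List (ℕ × ℤ × ℤ × List (ℤ × ℕ)) := [
  (0, 0, 2, [(1, 0), (-1, 2), (1, 3)]), (5, 0, 2, [(1, 5)]), (7, 343, 0, [(1, 7)]),
  (8, 0, 4, [(1, 8), (-1, 10)]), (13, 50, 1, [(1, 13)]), (15, 0, 6, [(1, 15)]),
  (21, 393, 1, [(1, 21)]), (22, 1, 3, [(1, 22)]), (23, 7, 2, [(1, 23), (-1, 26)]),
  (30, 7, 4, [(1, 30)]), (38, 57, 3, [(1, 38)]), (39, 8, 1, [(1, 39), (-1, 37)]),
  (44, 8, 3, [(1, 44), (-1, 43)]), (46, 400, 3, [(1, 46)]), (48, 58, 0, [(1, 48), (-1, 45)]),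
  (50, 8, 5, [(1, 50)]), (55, 401, 0, [(1, 55), (-1, 53)]), (57, 58, 4, [(1, 57)]),
  (62, 15, 3, [(1, 62)]), (64, 401, 4, [(1, 64)]), (68, 16, 0, [(1, 68)]),
  (69, 65, 2, [(1, 69), (-1, 70)]), (75, 65, 4, [(1, 75)]), (76, 408, 2, [(1, 76), (-1, 77)]),
  (79, 66, 1, [(1, 79)]), (81, 72, 0, [(1, 81)]), (82, 408, 4, [(1, 82)]),
  (85, 409, 1, [(1, 85)]), (86, 415, 0, [(1, 86)]), (87, 458, 3, [(1, 87)]),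
  (90, 459, 0, [(1, 90)]), (95, 465, 1, [(1, 95)]), (96, 73, 3, [(1, 96)]),
  (100, 416, 3, [(1, 100)]), (103, 466, 2, [(1, 103), (-1, 104)]), (106, 466, 4, [(1, 106)]),
  (109, 473, 0, [(1, 109), (-1, 108)]), (113, 473, 4, [(1, 113)]), (115, 474, 3, [(1, 115)]),
  (117, 481, 1, [(1, 117)]), (118, 531, 0, [(1, 118)]), (119, 874, 0, [(1, 119)]),
  (121, -1, 3, [(1, 121)]), (124, -7, 4, [(1, 124)]), (126, -50, 1, [(1, 126)]),
  (127, -343, 0, [(1, 127)]), (132, -7, 2, [(1, 132), (-1, 131)]), (134, -393, 1, [(1, 134)]),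
  (137, -8, 5, [(1, 137)]), (140, -57, 3, [(1, 140)]), (144, -8, 3, [(1, 144), (-1, 145)]),
  (148, -400, 3, [(1, 148)]), (149, -8, 1, [(1, 149), (-1, 151)]), (153, -58, 4, [(1, 153)]),
  (161, -401, 4, [(1, 161)]), (165, -58, 0, [(1, 165), (-1, 168)]), (167, -15, 3, [(1, 167)]),
  (174, -65, 4, [(1, 174)]), (175, -401, 0, [(1, 175), (-1, 173)]),
  (180, -65, 2, [(1, 180), (-1, 178)]), (181, -408, 4, [(1, 181)]),
  (186, -408, 2, [(1, 186), (-1, 187)]), (188, -16, 0, [(1, 188)]), (193, -458, 3, [(1, 193)]),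
  (194, -66, 1, [(1, 194)]), (200, -409, 1, [(1, 200)]), (201, -72, 0, [(1, 201)]),
  (204, -73, 3, [(1, 204)]), (206, -415, 0, [(1, 206)]), (209, -416, 3, [(1, 209)]),
  (210, -459, 0, [(1, 210)]), (211, -465, 1, [(1, 211)]), (214, -466, 4, [(1, 214)]),
  (218, -466, 2, [(1, 218), (-1, 219)]), (225, -473, 4, [(1, 225)]),
  (228, -473, 0, [(1, 228), (-1, 229)]), (231, -474, 3, [(1, 231)]), (236, -481, 1, [(1, 236)]),
  (238, -531, 0, [(1, 238)]), (239, -874, 0, [(1, 239)]),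
  (241, 0, 0, [(2, 241), (-2, 244), (1, 245)]),
  (242, 0, 0, [(2, 242), (-1, 240), (-3, 243), (4, 244), (-2, 245)]),
  (246, 0, 0, [(2, 246), (-1, 245)]), (247, 0, 0, [(1, 247)])]

/-- Distinguished indices. -/
def Kf (j : ℕ) : ℕ := (KL.getD j (0, 0, 0, [])).1
/-- Weights for `t`. -/
def Kw (j : ℕ) : ℤ := (KL.getD j (0, 0, 0, [])).2.1
/-- Weights for `h`. -/
def Kd (j : ℕ) : ℤ := (KL.getD j (0, 0, 0, [])).2.2.1
/-- Coordinates. -/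
def Kv (j : ℕ) : List (ℤ × ℕ) := (KL.getD j (0, 0, 0, [])).2.2.2

/-- Elimination steps: a combination of rows of `ad e` and the pivot column. -/
def steps : List (List (ℤ × ℕ) × ℕ) := [
  ([(1, 8)], 2), ([(1, 10)], 3), ([(1, 9)], 1), ([(1, 11)], 4), ([(1, 13)], 6), ([(1, 15)], 10),
  ([(1, 16)], 9), ([(1, 18)], 11), ([(1, 19)], 12), ([(1, 21)], 14), ([(1, 22)], 16),
  ([(1, 24)], 17), ([(1, 23)], 18), ([(1, 26)], 19), ([(1, 27)], 20), ([(1, 30)], 26),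
  ([(1, 29)], 24), ([(1, 32)], 25), ([(1, 34)], 27), ([(1, 35)], 28),
  ([(1, 36), (1, 37), (-1, 39)], 29), ([(1, 36)], 31), ([(1, 37)], 32), ([(1, 40)], 33),
  ([(1, 38)], 34), ([(1, 42)], 35), ([(1, 43)], 36), ([(1, 44)], 37), ([(1, 45)], 40),
  ([(1, 49)], 41), ([(1, 46)], 42), ([(1, 50)], 43), ([(1, 52)], 45), ([(1, 51)], 47),
  ([(1, 53)], 49), ([(1, 56)], 51), ([(1, 57)], 52), ([(1, 59)], 53), ([(1, 58)], 54),
  ([(1, 62)], 56), ([(1, 63)], 58), ([(1, 65)], 60), ([(1, 64)], 59), ([(1, 66)], 61),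
  ([(1, 69)], 63), ([(1, 70)], 65), ([(1, 71)], 66), ([(1, 72)], 67), ([(1, 75)], 70),
  ([(1, 76)], 71), ([(1, 77)], 72), ([(1, 78)], 73), ([(1, 79)], 74), ([(1, 82)], 77),
  ([(1, 83)], 78), ([(1, 85)], 80), ([(1, 87)], 83), ([(1, 88)], 84), ([(1, 92)], 88),
  ([(1, 93)], 89), ([(1, 95)], 91), ([(1, 96)], 92), ([(1, 97)], 93), ([(1, 98)], 94),
  ([(1, 100)], 97), ([(1, 101)], 98), ([(1, 102)], 99), ([(1, 103)], 101), ([(1, 104)], 102),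
  ([(1, 106)], 104), ([(1, 107)], 105), ([(1, 108)], 107), ([(1, 110)], 108), ([(1, 113)], 110),
  ([(1, 112)], 111), ([(1, 114)], 112), ([(1, 115)], 114), ([(1, 117)], 116), ([(1, 240)], 120),
  ([(1, 242)], 122), ([(1, 243)], 123), ([(1, 245)], 125), ([(1, 120)], 128), ([(1, 122)], 130),
  ([(1, 121)], 129), ([(1, 124)], 131), ([(1, 126)], 133), ([(1, 128)], 135), ([(1, 129)], 136),
  ([(1, 132)], 139), ([(1, 131)], 138), ([(1, 134)], 141), ([(1, 136)], 142), ([(1, 139)], 146),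
  ([(1, 138)], 143), ([(1, 137)], 145), ([(1, 140)], 147), ([(1, 145)], 152), ([(1, 144)], 151),
  ([(1, 143)], 150), ([(1, 147)], 154), ([(1, 148)], 155), ([(1, 149), (1, 151), (-1, 152)], 156),
  ([(1, 149)], 157), ([(1, 151)], 159), ([(1, 154)], 158), ([(1, 153)], 160), ([(1, 155)], 162),
  ([(1, 157)], 164), ([(1, 156)], 163), ([(1, 160)], 168), ([(1, 162)], 166), ([(1, 161)], 169),
  ([(1, 163)], 170), ([(1, 167)], 171), ([(1, 165)], 172), ([(1, 169)], 173), ([(1, 171)], 176),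
  ([(1, 172)], 177), ([(1, 174)], 178), ([(1, 173)], 179), ([(1, 176)], 182), ([(1, 180)], 185),
  ([(1, 178)], 183), ([(1, 179)], 184), ([(1, 181)], 187), ([(1, 185)], 190), ([(1, 183)], 189),
  ([(1, 187)], 192), ([(1, 186)], 191), ([(1, 189)], 195), ([(1, 192)], 197), ([(1, 191)], 196),
  ([(1, 193)], 198), ([(1, 194)], 199), ([(1, 196)], 202), ([(1, 198)], 203), ([(1, 200)], 205),
  ([(1, 203)], 207), ([(1, 204)], 208), ([(1, 208)], 212), ([(1, 209)], 213), ([(1, 211)], 215),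
  ([(1, 212)], 216), ([(1, 213)], 217), ([(1, 214)], 219), ([(1, 217)], 220), ([(1, 219)], 222),
  ([(1, 218)], 221), ([(1, 222)], 224), ([(1, 221)], 223), ([(1, 223)], 226), ([(1, 225)], 227),
  ([(1, 227)], 229), ([(1, 228)], 230), ([(1, 231)], 232), ([(1, 230)], 233), ([(1, 232)], 234),
  ([(1, 234)], 235), ([(1, 236)], 237), ([(1, 0)], 240), ([(1, 2)], 243), ([(1, 3)], 244),
  ([(1, 5)], 245)]

/-- Matrix entries of `ad e`. -/
def rc (r k : ℕ) : ℤ := coefAt (vA [(1, k)]) r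

/-- Entries of a combination of rows. -/
def rowc (R : List (ℤ × ℕ)) (k : ℕ) : ℤ := (R.map fun p => p.1 * rc p.2 k).sum

/-- The elimination certificate checker; `kn` is the bit mask of the coordinates known to be 0. -/
def elim : List (List (ℤ × ℕ) × ℕ) → ℕ → Bool
  | [], kn => (List.range 248).all fun k => kn.testBit k
  | (R, p) :: t, kn => (R.all fun q => decide (q.2 < 248)) && decide (p < 248) &&
      decide (rowc R p ≠ 0) &&
      ((List.range 248).all fun k => kn.testBit k || decide (k = p) || decide (rowc R k = 0)) &&
      elim t (kn ||| 2 ^ p)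

/-- Bit mask of the distinguished indices. -/
def mask : ℕ := 351275218671935858076033661081240518933700722636419518767259312730203529633

theorem chk_elim : elim steps mask = true := by decide +kernel

theorem chk_mask : ∀ k < 248, mask.testBit k = true → ∃ j < 84, Kf j = k := by decide +kernel

theorem chk_K1 : ∀ j < 84, isZ (vA (Kv j)) = true := by decide +kernel

theorem chk_K2 : ∀ j < 84, Kf j < 248 ∧ coefAt (Kv j) (Kf j) ≠ 0 ∧
    ∀ i < 84, i ≠ j → coefAt (Kv j) (Kf i) = 0 := by decide +kernel

/-- Coefficients of `t`. -/
def ct : Fin 8 → ℤ := ![947, 1421, 1894, 2841, 2367, 1886, 1405, 874]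

/-- Coefficients of `h`. -/
def ch : Fin 8 → ℤ := ![3, 0, 4, 3, 0, 1, 0, 0]

/-- Coefficients of `h₁`. -/
def ch1 : Fin 8 → ℤ := ![3, 0, 4, 3, 0, 0, 0, 0]

theorem chk_Kw : ∀ j < 84, ∀ p ∈ Kv j, ev ct p.2 = Kw j ∧ ev ch p.2 = Kd j := by decide +kernel

theorem chk_F1 : ∀ j < 84, Kd j ≤ 1 → isZ (vF1 (Kv j)) = true := by decide +kernel

theorem chk_kappa : ((List.range 248).map fun k => ev ch k * ev ch1 k).sum ≠ 0 := by
  decide +kernel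

/-- Bracket with a positive root vector on lists. -/
def adX : ℕ → ℕ → List (ℤ × ℕ) → List (ℤ × ℕ)
  | 0, _, _ => []
  | _ + 1, _, [] => []
  | n + 1, k, p :: l =>
    if k < 8 then scl (sg k) (vE k (p :: l)) else
    vE (pj k) (adX n (pp k) (p :: l)) ++ scl (-1) (adX n (pp k) (vE (pj k) (p :: l)))

/-- Bracket of lists, the first one supported on positive roots. -/
def brL (a b : List (ℤ × ℕ)) : List (ℤ × ℕ) := a.flatMap fun p => scl p.1 (adX 120 p.2 b)

/-- Pairs of basis vectors of the centralizer whose brackets have weight zero. -/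
def prs : List (ℕ × ℕ) := [(2, 45), (4, 44), (7, 42), (8, 46), (14, 55), (20, 62), (25, 66)]

/-- Expressions of the vectors of weight zero as combinations of `e` and brackets. -/
def cmb : List (ℕ × ℤ × List ℤ) := [
  (0, 1, [1, 0, 1, 0, 0, 0, 0, 0]), (1, 1, [0, 0, -1, 0, 0, 0, 0, 0]),
  (3, 1, [0, 0, 0, 0, 1, 0, 0, 0]), (5, 1, [0, 0, 0, -1, 0, 0, 0, 0]),
  (80, 1, [0, 0, 0, 0, 0, 1, -1, 2]), (81, 1, [0, 0, 0, 0, 0, -1, 0, -2]),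
  (82, 1, [0, 0, 0, 0, 0, 1, 1, 0]), (83, 1, [0, 1, 0, 0, 0, 0, 0, 0])]

/-- The coordinates of `e`. -/
def eL : List (ℤ × ℕ) := [(1, 0), (-1, 2), (1, 3), (1, 5)]

/-- Combination of `e` and brackets. -/
def cmbL (c : List ℤ) : List (ℤ × ℕ) :=
  scl (c.getD 0 0) eL ++ (prs.zip c.tail).flatMap fun q => scl q.2 (brL (Kv q.1.1) (Kv q.1.2))

theorem chk_prs : ∀ q ∈ prs, q.1 < 84 ∧ q.2 < 84 ∧ ∀ p ∈ Kv q.1, p.2 < 120 := by decide +kernel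

theorem chk_cmb : ∀ q ∈ cmb, q.2.1 ≠ 0 ∧ isZ (scl q.2.1 (Kv q.1) ++ scl (-1) (cmbL q.2.2)) = true := by
  decide +kernel

theorem chk_cmb_all : ∀ j < 84, Kw j = 0 → ∃ q ∈ cmb, q.1 = j := by decide +kernel

end E8Model

end

section

namespace E8Model

set_option linter.unusedSectionVars false

section Final

variable {L : Type*} [LieRing L] [LieAlgebra ℂ L] {E F H : Fin 8 → L}

theorem Xb (E F H : Fin 8 → L) : ∀ n, 248 ≤ n → X E F H n = 0 := fun _ h => X_big h

/-- The nilpotent element. -/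
def el (E : Fin 8 → L) : L := E 0 + E 2 + E 3 + E 5

/-- The opposite nilpotent element. -/
def fl (F : Fin 8 → L) : L := (3 : ℤ) • F 0 + (4 : ℤ) • F 2 + (3 : ℤ) • F 3 + F 5

/-- The component of the opposite nilpotent element in the first simple factor. -/
def f1 (F : Fin 8 → L) : L := (3 : ℤ) • F 0 + (4 : ℤ) • F 2 + (3 : ℤ) • F 3

theorem Sys.E_val (S : Sys E F H) (i : Fin 8) (l : List (ℤ × ℕ)) :
    ⁅E i, val (X E F H) l⁆ = val (X E F H) (vE i l) :=
  val_lmap (Xb E F H) (cf i) (actE i) (LieAlgebra.ad ℂ L (E i)).toAddMonoidHom (S.EX i) l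

theorem Sys.F_val (S : Sys E F H) (i : Fin 8) (l : List (ℤ × ℕ)) :
    ⁅F i, val (X E F H) l⁆ = val (X E F H) (vF i l) :=
  val_lmap (Xb E F H) (cf i) (actF i) (LieAlgebra.ad ℂ L (F i)).toAddMonoidHom (S.FX i) l

theorem Sys.e_val (S : Sys E F H) (l : List (ℤ × ℕ)) :
    ⁅el E, val (X E F H) l⁆ = val (X E F H) (vA l) := by
  simp only [el, vA, add_lie, S.E_val, val_append]
  rfl

theorem Sys.f1_val (S : Sys E F H) (l : List (ℤ × ℕ)) :
    ⁅f1 F, val (X E F H) l⁆ = val (X E F H) (vF1 l) := by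
  simp only [f1, vF1, add_lie, smul_lie, S.F_val, val_append, val_scl]
  rfl

theorem Sys.t_val (S : Sys E F H) (c : Fin 8 → ℤ) (w : ℤ) (l : List (ℤ × ℕ))
    (h : ∀ p ∈ l, ev c p.2 = w) :
    ⁅tH H c, val (X E F H) l⁆ = w • val (X E F H) l := by
  induction l with
  | nil => simp
  | cons p l ih =>
    rw [val_cons, lie_add, lie_smul, S.tX, ih fun q hq => h q (List.mem_cons_of_mem _ hq),
      h p List.mem_cons_self, smul_add, smul_comm]

theorem el_val : val (X E F H) eL = el E := by
  have h : ∀ i : Fin 8, X E F H i = sg i • E i := fun i => by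
    rw [X_pos (by omega), Y_simple, one_mul]
  have h0 := h 0
  have h2 := h 2
  have h3 := h 3
  have h5 := h 5
  simp only [eL, val_cons, val_nil]
  change (1 : ℤ) • X E F H ((0 : Fin 8) : ℕ) + ((-1 : ℤ) • X E F H ((2 : Fin 8) : ℕ) +
    ((1 : ℤ) • X E F H ((3 : Fin 8) : ℕ) + ((1 : ℤ) • X E F H ((5 : Fin 8) : ℕ) + 0))) = _
  rw [h0, h2, h3, h5]
  have s0 : sg ((0 : Fin 8) : ℕ) = 1 := rfl
  have s2 : sg ((2 : Fin 8) : ℕ) = -1 := rfl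
  have s3 : sg ((3 : Fin 8) : ℕ) = 1 := rfl
  have s5 : sg ((5 : Fin 8) : ℕ) = 1 := rfl
  rw [s0, s2, s3, s5, el]
  simp only [one_smul, neg_smul, neg_neg, add_zero, add_assoc]

theorem Sys.adX_val (S : Sys E F H) (n : ℕ) : ∀ (k : ℕ) (_ : k < n) (_ : k < 120)
    (l : List (ℤ × ℕ)), ⁅X E F H k, val (X E F H) l⁆ = val (X E F H) (adX n k l) := by
  induction n with
  | zero => intro k hk; omega
  | succ n ih =>
    intro k hk hk' l
    cases l with
    | nil => simp [adX]
    | cons p l =>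
      rw [adX]
      split_ifs with h8
      · rw [X_pos hk', Y_simple' _ _ _ h8, one_mul, smul_lie, S.E_val, val_scl]
      · have hp := (chk_par k hk' (by omega)).1
        rw [X_pos hk', Y_step _ _ (by omega) hk', lie_lie, ← X_pos (F := F) (H := H) (hp.trans hk'),
          S.E_val, ih _ (by omega) (by omega), ih _ (by omega) (by omega), S.E_val, val_append,
          val_scl, neg_smul, one_smul, sub_eq_add_neg]

theorem Sys.brL_val (S : Sys E F H) (a b : List (ℤ × ℕ)) (ha : ∀ p ∈ a, p.2 < 120) :
    ⁅val (X E F H) a, val (X E F H) b⁆ = val (X E F H) (brL a b) := by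
  induction a with
  | nil => simp [brL]
  | cons p a ih =>
    have : brL (p :: a) b = scl p.1 (adX 120 p.2 b) ++ brL a b := rfl
    have hp := ha p List.mem_cons_self
    rw [val_cons, add_lie, smul_lie, S.adX_val 120 _ hp hp,
      ih fun q hq => ha q (List.mem_cons_of_mem _ hq), this, val_append, val_scl]

theorem Sys.tE (S : Sys E F H) (c : Fin 8 → ℤ) (j : Fin 8) :
    ⁅tH H c, E j⁆ = (∑ i, c i * cz i j) • E j := by
  rw [tH, sum_lie, Finset.sum_smul]
  refine Finset.sum_congr rfl fun i _ => ?_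
  rw [smul_lie, S.he, smul_smul]

theorem Sys.tF (S : Sys E F H) (c : Fin 8 → ℤ) (j : Fin 8) :
    ⁅tH H c, F j⁆ = -((∑ i, c i * cz i j) • F j) := by
  rw [tH, sum_lie, Finset.sum_smul, ← Finset.sum_neg_distrib]
  refine Finset.sum_congr rfl fun i _ => ?_
  rw [smul_lie, S.hf, smul_neg, smul_smul]

theorem chk_che : ∀ j : Fin 8, j = 0 ∨ j = 2 ∨ j = 3 ∨ j = 5 →
    ∑ i, ch i * cz i j = 2 ∧ ∑ i, ct i * cz i j = 0 := by decide +kernel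

theorem Sys.he_el (S : Sys E F H) : ⁅tH H ch, el E⁆ = (2 : ℤ) • el E := by
  simp only [el, lie_add, S.tE, smul_add, (chk_che 0 (by decide)).1, (chk_che 2 (by decide)).1,
    (chk_che 3 (by decide)).1, (chk_che 5 (by decide)).1]

theorem Sys.ht_el (S : Sys E F H) : ⁅tH H ct, el E⁆ = 0 := by
  simp only [el, lie_add, S.tE, (chk_che 0 (by decide)).2, (chk_che 2 (by decide)).2,
    (chk_che 3 (by decide)).2, (chk_che 5 (by decide)).2, zero_smul, add_zero]

theorem Sys.hf_fl (S : Sys E F H) : ⁅tH H ch, fl F⁆ = -((2 : ℤ) • fl F) := by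
  simp only [fl, lie_add, lie_smul, S.tF, (chk_che 0 (by decide)).1, (chk_che 2 (by decide)).1,
    (chk_che 3 (by decide)).1, (chk_che 5 (by decide)).1]
  module

theorem Sys.hf_f1 (S : Sys E F H) : ⁅tH H ch, f1 F⁆ = -((2 : ℤ) • f1 F) := by
  simp only [f1, lie_add, lie_smul, S.tF, (chk_che 0 (by decide)).1, (chk_che 2 (by decide)).1,
    (chk_che 3 (by decide)).1]
  module

theorem Sys.e_f1 (S : Sys E F H) : ⁅el E, f1 F⁆ = tH H ch1 := by
  have h : tH H ch1 = (3 : ℤ) • H 0 + (4 : ℤ) • H 2 + (3 : ℤ) • H 3 := by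
    simp [tH, Fin.sum_univ_eight, ch1]
  have n : ∀ i j : Fin 8, i ≠ j → ⁅E i, F j⁆ = 0 := S.ef_ne
  rw [h, el, f1]
  simp only [add_lie, lie_add, lie_smul, S.ef_same]
  simp [n]

theorem Sys.e_f (S : Sys E F H) : ⁅el E, fl F⁆ = tH H ch := by
  have h : tH H ch = (3 : ℤ) • H 0 + (4 : ℤ) • H 2 + (3 : ℤ) • H 3 + H 5 := by
    simp [tH, Fin.sum_univ_eight, ch]
  have n : ∀ i j : Fin 8, i ≠ j → ⁅E i, F j⁆ = 0 := S.ef_ne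
  rw [h, el, fl]
  simp only [add_lie, lie_add, lie_smul, S.ef_same]
  simp [n]

theorem Sys.triple (S : Sys E F H) (hE : ∀ i, E i ≠ 0) : IsSl2Triple (tH H ch) (el E) (fl F) where
  h_ne_zero h := by
    have h1 := S.tE ch 0
    rw [h, zero_lie, (chk_che 0 (by decide)).1] at h1
    exact zsmul_ne (by norm_num) (hE 0) h1.symm
  lie_e_f := S.e_f
  lie_h_e_nsmul := by rw [S.he_el, two_zsmul, two_nsmul]
  lie_h_f_nsmul := by rw [S.hf_fl, two_zsmul, two_nsmul]

end Final

end E8Model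

end

section

namespace E8Model

theorem elim_sound (x : ℕ → ℂ)
    (hx : ∀ r < 248, ∑ k : Fin 248, x k * (rc r k : ℤ) = 0) :
    ∀ (l : List (List (ℤ × ℕ) × ℕ)) (kn : ℕ), (∀ k < 248, kn.testBit k = true → x k = 0) →
      elim l kn = true → ∀ k < 248, x k = 0 := by
  intro l
  induction l with
  | nil =>
    intro kn h1 h2 k hk
    exact h1 k hk (List.all_eq_true.1 h2 k (List.mem_range.2 hk))
  | cons a t ih =>
    obtain ⟨R, p⟩ := a
    intro kn h1 h2
    simp only [elim, Bool.and_eq_true, decide_eq_true_eq, List.all_eq_true, Bool.or_eq_true,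
      List.mem_range] at h2
    obtain ⟨⟨⟨⟨hR, hp⟩, hp0⟩, hk⟩, ht⟩ := h2
    have hrow : ∑ k : Fin 248, x k * (rowc R k : ℤ) = 0 := by
      clear hp0 hk
      induction R with
      | nil => simp [rowc]
      | cons q R ihR =>
        have h3 : ∀ k, rowc (q :: R) k = q.1 * rc q.2 k + rowc R k := fun k => by simp [rowc]
        have h4 := ihR fun y hy => hR y (List.mem_cons_of_mem _ hy)
        have h5 := hx q.2 (hR q List.mem_cons_self)
        calc ∑ k : Fin 248, x k * (rowc (q :: R) k : ℤ)
            = q.1 * ∑ k : Fin 248, x k * (rc q.2 k : ℤ) + ∑ k : Fin 248, x k * (rowc R k : ℤ) := by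
              rw [Finset.mul_sum, ← Finset.sum_add_distrib]
              refine Finset.sum_congr rfl fun k _ => ?_
              rw [h3]
              push_cast
              ring
          _ = 0 := by rw [h4, h5]; ring
    have hxp : x p = 0 := by
      rw [Finset.sum_eq_single (⟨p, hp⟩ : Fin 248)] at hrow
      · exact (mul_eq_zero.1 hrow).resolve_right (Int.cast_ne_zero.2 hp0)
      · intro k _ hkp
        rcases hk k k.2 with (h | h) | h
        · rw [h1 k k.2 h, zero_mul]
        · exact absurd (Fin.ext h) hkp
        · rw [h, Int.cast_zero, mul_zero]
      · simp
    refine ih _ (fun k hk' h => ?_) ht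
    rw [Nat.testBit_or, Bool.or_eq_true] at h
    rcases h with h | h
    · exact h1 k hk' h
    · rw [Nat.testBit_two_pow] at h
      rw [← (of_decide_eq_true h : p = k)]
      exact hxp

section Final

variable {L : Type*} [LieRing L] [LieAlgebra ℂ L] {E F H : Fin 8 → L}

/-- The basis of the centralizer. -/
noncomputable def Kb (E F H : Fin 8 → L) (j : Fin 84) : L := val (X E F H) (Kv j)

theorem Sys.repr_val (S : Sys E F H) (hE : ∀ i, E i ≠ 0) (hG : Gen E F) (l : List (ℤ × ℕ))
    (n : Fin 248) : (S.basis hE hG).repr (val (X E F H) l) n = (coefAt l n : ℤ) := by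
  have h : val (X E F H) l = ∑ n : Fin 248, ((coefAt l n : ℤ) : ℂ) • S.basis hE hG n := by
    rw [val_eq_sum (Xb E F H)]
    refine Finset.sum_congr rfl fun k _ => ?_
    rw [S.basis_apply, Int.cast_smul_eq_zsmul]
  rw [h, Module.Basis.repr_sum_self]

theorem Sys.row (S : Sys E F H) (hE : ∀ i, E i ≠ 0) (hG : Gen E F) (v : L) (hv : ⁅el E, v⁆ = 0)
    (r : Fin 248) : ∑ k : Fin 248, (S.basis hE hG).repr v k * (rc r k : ℤ) = 0 := by
  have h1 : ⁅el E, v⁆ = ∑ k : Fin 248, (S.basis hE hG).repr v k •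
      val (X E F H) (vA [(1, k)]) := by
    conv_lhs => rw [← (S.basis hE hG).sum_repr v]
    rw [lie_sum]
    refine Finset.sum_congr rfl fun k _ => ?_
    rw [lie_smul, ← S.e_val, S.basis_apply]
    simp
  have h2 := congrArg (fun w => (S.basis hE hG).repr w r) h1
  simp only [hv, map_zero, map_sum, map_smul, Finsupp.coe_zero, Pi.zero_apply,
    Finsupp.coe_finsetSum, Finset.sum_apply, Finsupp.coe_smul, Pi.smul_apply, S.repr_val,
    smul_eq_mul] at h2
  exact h2.symm

theorem Sys.Kb_mem (S : Sys E F H) (j : Fin 84) : ⁅el E, Kb E F H j⁆ = 0 := by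
  rw [Kb, S.e_val, val_isZ (Xb E F H) _ (chk_K1 j j.2)]

theorem Sys.repr_Kb (S : Sys E F H) (hE : ∀ i, E i ≠ 0) (hG : Gen E F) (j i : Fin 84) :
    (S.basis hE hG).repr (Kb E F H j) ⟨Kf i, (chk_K2 i i.2).1⟩ =
      if i = j then ((coefAt (Kv j) (Kf j) : ℤ) : ℂ) else 0 := by
  rw [Kb, S.repr_val]
  split_ifs with h
  · rw [h]
  · rw [(chk_K2 j j.2).2.2 i i.2 (fun h' => h (Fin.ext h')), Int.cast_zero]

theorem Sys.Kb_li (S : Sys E F H) (hE : ∀ i, E i ≠ 0) (hG : Gen E F) :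
    LinearIndependent ℂ (Kb E F H) := by
  rw [Fintype.linearIndependent_iff]
  intro c hc i
  have h := congrArg (fun w => (S.basis hE hG).repr w ⟨Kf i, (chk_K2 i i.2).1⟩) hc
  simp only [map_zero, map_sum, map_smul, Finsupp.coe_zero, Pi.zero_apply,
    Finsupp.coe_finsetSum, Finset.sum_apply, Finsupp.coe_smul, Pi.smul_apply, S.repr_Kb,
    smul_eq_mul, mul_ite, mul_zero, Finset.sum_ite_eq, Finset.mem_univ, if_true] at h
  exact (mul_eq_zero.1 h).resolve_right (Int.cast_ne_zero.2 (chk_K2 i i.2).2.1)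

theorem Sys.cent (S : Sys E F H) (hE : ∀ i, E i ≠ 0) (hG : Gen E F) (v : L)
    (hv : ⁅el E, v⁆ = 0) : v ∈ Submodule.span ℂ (Set.range (Kb E F H)) := by
  set b := S.basis hE hG with hb
  set c : Fin 84 → ℂ := fun j => b.repr v ⟨Kf j, (chk_K2 j j.2).1⟩ /
    ((coefAt (Kv j) (Kf j) : ℤ) : ℂ) with hc
  set u := v - ∑ j, c j • Kb E F H j with hu
  have hue : ⁅el E, u⁆ = 0 := by
    rw [hu, lie_sub, hv, lie_sum, zero_sub, Finset.sum_eq_zero, neg_zero]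
    intro j _
    rw [lie_smul, S.Kb_mem, smul_zero]
  have huf : ∀ i : Fin 84, b.repr u ⟨Kf i, (chk_K2 i i.2).1⟩ = 0 := by
    intro i
    simp only [hu, map_sub, map_sum, map_smul, Finsupp.coe_sub, Pi.sub_apply,
      Finsupp.coe_finsetSum, Finset.sum_apply, Finsupp.coe_smul, Pi.smul_apply, hb, S.repr_Kb,
      smul_eq_mul, mul_ite, mul_zero, Finset.sum_ite_eq, Finset.mem_univ, if_true]
    rw [hc]
    have := Int.cast_ne_zero (α := ℂ).2 (chk_K2 i i.2).2.1
    simp only [hb]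
    rw [div_mul_cancel₀ _ this, sub_self]
  have hu0 : u = 0 := by
    let x : ℕ → ℂ := fun k => if h : k < 248 then b.repr u ⟨k, h⟩ else 0
    have hx : ∀ k : Fin 248, x k = b.repr u k := fun k => dif_pos k.2
    have h := elim_sound x (fun r hr => by
      simp only [hx]
      exact S.row hE hG u hue ⟨r, hr⟩) steps mask (fun k hk hm => by
        obtain ⟨j, hj, hjk⟩ := chk_mask k hk hm
        have := huf ⟨j, hj⟩
        subst hjk
        exact (hx ⟨Kf j, hk⟩).trans this) chk_elim
    apply b.repr.injective
    ext k
    rw [← hx, h k k.2, map_zero]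
    rfl
  have : v = ∑ j, c j • Kb E F H j := sub_eq_zero.1 hu0
  rw [this]
  exact Submodule.sum_mem _ fun j _ => Submodule.smul_mem _ _ (Submodule.subset_span ⟨j, rfl⟩)

theorem Sys.t_Kb (S : Sys E F H) (j : Fin 84) : ⁅tH H ct, Kb E F H j⁆ = Kw j • Kb E F H j :=
  S.t_val ct _ _ fun p hp => (chk_Kw j j.2 p hp).1

theorem Sys.h_Kb (S : Sys E F H) (j : Fin 84) : ⁅tH H ch, Kb E F H j⁆ = Kd j • Kb E F H j :=
  S.t_val ch _ _ fun p hp => (chk_Kw j j.2 p hp).2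

theorem Sys.f1_Kb (S : Sys E F H) (j : Fin 84) (h : Kd j ≤ 1) : ⁅f1 F, Kb E F H j⁆ = 0 := by
  rw [Kb, S.f1_val, val_isZ (Xb E F H) _ (chk_F1 j j.2 h)]

/-- The span of brackets of elements commuting with `e`. -/
def Dr (E : Fin 8 → L) : Submodule ℂ L :=
  Submodule.span ℂ {z : L | ∃ x : L, ⁅el E, x⁆ = 0 ∧ ∃ y : L, ⁅el E, y⁆ = 0 ∧ z = ⁅x, y⁆}

theorem zsmul_mem_iff' {W : Submodule ℂ L} {c : ℤ} (hc : c ≠ 0) {v : L} : c • v ∈ W → v ∈ W := by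
  rw [← Int.cast_smul_eq_zsmul ℂ]
  exact (W.smul_mem_iff (Int.cast_ne_zero.2 hc)).1

theorem zsmul_mem' {W : Submodule ℂ L} (c : ℤ) {v : L} (h : v ∈ W) : c • v ∈ W := by
  rw [← Int.cast_smul_eq_zsmul ℂ]
  exact W.smul_mem _ h

theorem Sys.Kb_mem_Dr (S : Sys E F H) (j : Fin 84) :
    Kb E F H j ∈ Submodule.span ℂ {el E} ⊔ Dr E := by
  have hbr : ∀ x y : L, ⁅el E, x⁆ = 0 → ⁅el E, y⁆ = 0 → ⁅x, y⁆ ∈ Submodule.span ℂ {el E} ⊔ Dr E :=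
    fun x y hx hy => Submodule.mem_sup_right (Submodule.subset_span ⟨x, hx, y, hy, rfl⟩)
  by_cases hw : Kw j = 0
  swap
  · refine zsmul_mem_iff' hw ?_
    rw [← S.t_Kb]
    refine hbr _ _ ?_ (S.Kb_mem j)
    rw [← lie_skew, S.ht_el, neg_zero]
  · obtain ⟨q, hq, hqj⟩ := chk_cmb_all j j.2 hw
    obtain ⟨hq0, hqz⟩ := chk_cmb q hq
    have h1 := val_isZ (Xb E F H) _ hqz
    rw [val_append, val_scl, val_scl, neg_smul, one_smul, ← sub_eq_add_neg, sub_eq_zero, hqj] at h1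
    refine zsmul_mem_iff' hq0 ?_
    rw [show Kb E F H j = val (X E F H) (Kv j) from rfl, h1, cmbL, val_append, val_scl, el_val]
    refine add_mem (zsmul_mem' _ (Submodule.mem_sup_left (Submodule.mem_span_singleton_self _))) ?_
    have key : ∀ m : List ((ℕ × ℕ) × ℤ), (∀ a ∈ m, a.1 ∈ prs) →
        val (X E F H) (m.flatMap fun q => scl q.2 (brL (Kv q.1.1) (Kv q.1.2))) ∈
          Submodule.span ℂ {el E} ⊔ Dr E := by
      intro m
      induction m with
      | nil => intro _; exact zero_mem _
      | cons a m ih =>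
        intro hm
        obtain ⟨ha1, ha2, ha3⟩ := chk_prs a.1 (hm a List.mem_cons_self)
        rw [List.flatMap_cons, val_append, val_scl, ← S.brL_val _ _ ha3]
        exact add_mem (zsmul_mem' _ (hbr _ _ (S.Kb_mem ⟨_, ha1⟩) (S.Kb_mem ⟨_, ha2⟩)))
          (ih fun y hy => hm y (List.mem_cons_of_mem _ hy))
    exact key _ fun a ha => (List.of_mem_zip ha).1

/-- The linear form `z ↦ κ(z, f₁)`. -/
noncomputable def lam (F : Fin 8 → L) : L →ₗ[ℂ] ℂ := (LieModule.traceForm ℂ L L).flip (f1 F)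

theorem lam_lie (x y : L) : lam F ⁅x, y⁆ = LieModule.traceForm ℂ L L x ⁅y, f1 F⁆ :=
  LieModule.traceForm_apply_lie_apply ℂ L L x y (f1 F)

theorem Sys.lam_deg (S : Sys E F H) (u : L) (d : ℤ) (hu : ⁅tH H ch, u⁆ = d • u) (hd : d ≠ 2) :
    lam F u = 0 := by
  have h1 : lam F ⁅u, tH H ch⁆ = LieModule.traceForm ℂ L L u ⁅tH H ch, f1 F⁆ := lam_lie _ _
  rw [← lie_skew, hu, S.hf_f1, map_neg, map_neg, map_zsmul, map_zsmul, neg_inj] at h1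
  have h2 : LieModule.traceForm ℂ L L u (f1 F) = lam F u := rfl
  rw [h2, ← sub_eq_zero, ← sub_smul] at h1
  exact (smul_eq_zero.1 h1).resolve_left (sub_ne_zero.2 hd)

theorem Sys.lam_Kb (S : Sys E F H) (i j : Fin 84) : lam F ⁅Kb E F H i, Kb E F H j⁆ = 0 := by
  by_cases hj : Kd j ≤ 1
  · rw [lam_lie, ← lie_skew, S.f1_Kb j hj, neg_zero, map_zero]
  by_cases hi : Kd i ≤ 1
  · rw [← lie_skew, map_neg, lam_lie, ← lie_skew, S.f1_Kb i hi, neg_zero, map_zero, neg_zero]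
  refine S.lam_deg _ (Kd i + Kd j) ?_ (by omega)
  rw [leibniz_lie, S.h_Kb, S.h_Kb, smul_lie, lie_smul, add_smul]

theorem Sys.lam_Dr (S : Sys E F H) (hE : ∀ i, E i ≠ 0) (hG : Gen E F) (z : L) (hz : z ∈ Dr E) :
    lam F z = 0 := by
  unfold Dr at hz
  induction hz using Submodule.span_induction with
  | zero => exact map_zero _
  | add a b _ _ ha hb => rw [map_add, ha, hb, add_zero]
  | smul c a _ ha => rw [map_smul, ha, smul_zero]
  | mem z hz =>
    obtain ⟨x, hx, y, hy, rfl⟩ := hz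
    have hy' := S.cent hE hG y hy
    have hx' := S.cent hE hG x hx
    clear hx hy
    induction hx' using Submodule.span_induction with
    | zero => rw [zero_lie, map_zero]
    | add a b _ _ ha hb => rw [add_lie, map_add, ha, hb, add_zero]
    | smul c a _ ha => rw [smul_lie, map_smul, ha, smul_zero]
    | mem x hx =>
      obtain ⟨i, rfl⟩ := hx
      induction hy' using Submodule.span_induction with
      | zero => rw [lie_zero, map_zero]
      | add a b _ _ ha hb => rw [lie_add, map_add, ha, hb, add_zero]
      | smul c a _ ha => rw [lie_smul, map_smul, ha, smul_zero]
      | mem y hy =>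
        obtain ⟨j, rfl⟩ := hy
        exact S.lam_Kb i j

theorem list_sum_range (f : ℕ → ℤ) (n : ℕ) :
    ((List.range n).map f).sum = ∑ k ∈ Finset.range n, f k := by
  induction n with
  | zero => simp
  | succ n ih => simp [List.range_succ, Finset.sum_range_succ, ih]

theorem Sys.trace_hh (S : Sys E F H) (hE : ∀ i, E i ≠ 0) (hG : Gen E F) :
    LieModule.traceForm ℂ L L (tH H ch) (tH H ch1) ≠ 0 := by
  have h : LieModule.traceForm ℂ L L (tH H ch) (tH H ch1) =
      ((∑ k : Fin 248, ev ch k * ev ch1 k : ℤ) : ℂ) := by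
    rw [LieModule.traceForm_apply_apply, LinearMap.trace_eq_matrix_trace ℂ (S.basis hE hG),
      Matrix.trace, Int.cast_sum]
    refine Finset.sum_congr rfl fun k _ => ?_
    rw [Matrix.diag_apply, LinearMap.toMatrix_apply, LinearMap.comp_apply,
      LieModule.toEnd_apply_apply, LieModule.toEnd_apply_apply, S.basis_apply, S.tX, lie_smul,
      S.tX, smul_smul, ← S.basis_apply hE hG, map_zsmul, Module.Basis.repr_self]
    simp [mul_comm]
  rw [h]
  refine Int.cast_ne_zero.2 ?_
  have h1 := chk_kappa
  rw [list_sum_range] at h1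
  rwa [Fin.sum_univ_eq_sum_range (fun k => ev ch k * ev ch1 k) 248]

theorem Sys.lam_e (S : Sys E F H) (hE : ∀ i, E i ≠ 0) (hG : Gen E F) : lam F (el E) ≠ 0 := by
  intro h
  have h1 : lam F ⁅tH H ch, el E⁆ = LieModule.traceForm ℂ L L (tH H ch) ⁅el E, f1 F⁆ := lam_lie _ _
  rw [S.he_el, map_zsmul, h, smul_zero, S.e_f1] at h1
  exact S.trace_hh hE hG h1.symm

end Final

end E8Model

end

section

namespace E8Model

section Instance

open CartanMatrix

/-- The free Lie algebra on the Chevalley generators. -/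
abbrev FL : Type := FreeLieAlgebra ℂ (Generators (Fin 8))

/-- The Lie algebra of type E₈. -/
abbrev G8 : Type := LieAlgebra.e₈ ℂ

/-- The quotient map. -/
noncomputable def qm : FL →ₗ⁅ℂ⁆ G8 :=
  { toLinearMap := ((LieSubmodule.Quotient.mk' (Relations.toIdeal ℂ E₈)).toLinearMap :
      FL →ₗ[ℂ] FL ⧸ Relations.toIdeal ℂ E₈)
    map_lie' := fun {x y} => LieSubmodule.Quotient.mk_bracket (Relations.toIdeal ℂ E₈) x y }

theorem qm_surj : Function.Surjective qm := LieSubmodule.Quotient.surjective_mk' (Relations.toIdeal ℂ E₈)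

theorem qm_zero (x : FL) : qm x = 0 ↔ x ∈ Relations.toIdeal ℂ E₈ :=
  LieSubmodule.Quotient.mk_eq_zero (Relations.toIdeal ℂ E₈)

theorem qm_rel (x : FL) (h : x ∈ Relations.toSet ℂ E₈) : qm x = 0 :=
  (qm_zero x).2 (LieSubmodule.subset_lieSpan h)

/-- The generators. -/
noncomputable def gE (i : Fin 8) : FL := FreeLieAlgebra.of ℂ (Generators.E i)
/-- The generators. -/
noncomputable def gF (i : Fin 8) : FL := FreeLieAlgebra.of ℂ (Generators.F i)
/-- The generators. -/
noncomputable def gH (i : Fin 8) : FL := FreeLieAlgebra.of ℂ (Generators.H i)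

theorem mem_adE (i j : Fin 8) :
    (((LieAlgebra.ad ℂ FL (gE i)) ^ (-E₈ i j).toNat) ⁅gE i, gE j⁆) ∈ Relations.toSet ℂ E₈ :=
  Or.inl (Or.inr ⟨(i, j), rfl⟩)

theorem mem_adF (i j : Fin 8) :
    (((LieAlgebra.ad ℂ FL (gF i)) ^ (-E₈ i j).toNat) ⁅gF i, gF j⁆) ∈ Relations.toSet ℂ E₈ :=
  Or.inr ⟨(i, j), rfl⟩

theorem g8_sys : Sys (fun i => qm (gE i)) (fun i => qm (gF i)) (fun i => qm (gH i)) where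
  hh i j := by
    rw [← LieHom.map_lie]
    exact qm_rel _ (Or.inl (Or.inl (Or.inl (Or.inl (Or.inl ⟨(i, j), rfl⟩)))))
  ef_same i := by
    rw [← LieHom.map_lie, ← sub_eq_zero, ← map_sub]
    refine qm_rel _ (Or.inl (Or.inl (Or.inl (Or.inl (Or.inr ⟨(i, i), ?_⟩)))))
    exact if_pos rfl
  ef_ne i j h := by
    rw [← LieHom.map_lie]
    refine qm_rel _ (Or.inl (Or.inl (Or.inl (Or.inl (Or.inr ⟨(i, j), ?_⟩)))))
    exact if_neg h
  he i j := by
    rw [← LieHom.map_lie, ← sub_eq_zero, ← map_zsmul, ← map_sub, ← chk_cartan]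
    exact qm_rel _ (Or.inl (Or.inl (Or.inl (Or.inr ⟨(i, j), rfl⟩))))
  hf i j := by
    rw [← LieHom.map_lie, ← sub_eq_zero, ← map_zsmul, sub_neg_eq_add, ← map_add, ← chk_cartan]
    exact qm_rel _ (Or.inl (Or.inl (Or.inr ⟨(i, j), rfl⟩)))
  ee0 i j h := by
    have := qm_rel _ (mem_adE i j)
    rwa [chk_cartan, h, neg_zero, Int.toNat_zero, pow_zero, Module.End.one_apply,
      LieHom.map_lie] at this
  ee1 i j h := by
    have := qm_rel _ (mem_adE i j)
    rwa [chk_cartan, h, neg_neg, Int.toNat_one, pow_one, LieAlgebra.ad_apply, LieHom.map_lie,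
      LieHom.map_lie] at this
  ff0 i j h := by
    have := qm_rel _ (mem_adF i j)
    rwa [chk_cartan, h, neg_zero, Int.toNat_zero, pow_zero, Module.End.one_apply,
      LieHom.map_lie] at this
  ff1 i j h := by
    have := qm_rel _ (mem_adF i j)
    rwa [chk_cartan, h, neg_neg, Int.toNat_one, pow_one, LieAlgebra.ad_apply, LieHom.map_lie,
      LieHom.map_lie] at this

theorem g8_gen : Gen (fun i => qm (gE i)) (fun i => qm (gF i)) := by
  intro N hE hF x
  have hH : ∀ i, qm (gH i) ∈ N := fun i => by
    rw [← g8_sys.ef_same i]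
    exact N.lie_mem (hE i) (hF i)
  let φ : FL →ₗ⁅ℂ⁆ N := FreeLieAlgebra.lift ℂ fun g => match g with
    | Generators.E i => ⟨qm (gE i), hE i⟩
    | Generators.F i => ⟨qm (gF i), hF i⟩
    | Generators.H i => ⟨qm (gH i), hH i⟩
  have h : N.incl.comp φ = qm := by
    apply FreeLieAlgebra.hom_ext
    intro g
    cases g <;> simp [φ, FreeLieAlgebra.lift_of_apply] <;> rfl
  obtain ⟨y, rfl⟩ := qm_surj x
  rw [← h]
  exact (φ y).2

attribute [local instance] LieRing.ofAssociativeRing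

/-- The action on the model. -/
noncomputable def mdl : FL →ₗ⁅ℂ⁆ Module.End ℂ V := FreeLieAlgebra.lift ℂ fun g => match g with
    | Generators.E i => opE i
    | Generators.F i => opF i
    | Generators.H i => opH i

theorem mdl_E (i : Fin 8) : mdl (gE i) = opE i := FreeLieAlgebra.lift_of_apply ..
theorem mdl_F (i : Fin 8) : mdl (gF i) = opF i := FreeLieAlgebra.lift_of_apply ..
theorem mdl_H (i : Fin 8) : mdl (gH i) = opH i := FreeLieAlgebra.lift_of_apply ..

theorem cz_cases (i j : Fin 8) : i = j ∨ cz i j = 0 ∨ cz i j = -1 := by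
  revert i j
  decide

theorem rel_le : Relations.toIdeal ℂ E₈ ≤ mdl.ker := by
  refine LieSubmodule.lieSpan_le.2 ?_
  intro x hx
  rw [SetLike.mem_coe, LieHom.mem_ker]
  rcases hx with ((((⟨⟨i, j⟩, rfl⟩ | ⟨⟨i, j⟩, rfl⟩) | ⟨⟨i, j⟩, rfl⟩) | ⟨⟨i, j⟩, rfl⟩) |
    ⟨⟨i, j⟩, rfl⟩) | ⟨⟨i, j⟩, rfl⟩
  · change mdl ⁅gH i, gH j⁆ = 0
    rw [LieHom.map_lie, mdl_H, mdl_H, model_sys.hh]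
  · change mdl (if i = j then ⁅gE i, gF i⁆ - gH i else ⁅gE i, gF j⁆) = 0
    split_ifs with h
    · rw [map_sub, LieHom.map_lie, mdl_E, mdl_F, mdl_H, model_sys.ef_same, sub_self]
    · rw [LieHom.map_lie, mdl_E, mdl_F, model_sys.ef_ne _ _ h]
  · change mdl (⁅gH i, gE j⁆ - E₈ i j • gE j) = 0
    rw [map_sub, map_zsmul, LieHom.map_lie, mdl_H, mdl_E, model_sys.he, chk_cartan, sub_self]
  · change mdl (⁅gH i, gF j⁆ + E₈ i j • gF j) = 0
    rw [map_add, map_zsmul, LieHom.map_lie, mdl_H, mdl_F, model_sys.hf, chk_cartan,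
      neg_add_cancel]
  · change mdl (((LieAlgebra.ad ℂ FL (gE i)) ^ (-E₈ i j).toNat) ⁅gE i, gE j⁆) = 0
    rw [chk_cartan]
    rcases cz_cases i j with rfl | h | h
    · rw [lie_self, map_zero, map_zero]
    · rw [h, neg_zero, Int.toNat_zero, pow_zero, Module.End.one_apply, LieHom.map_lie, mdl_E,
        mdl_E, model_sys.ee0 _ _ h]
    · rw [h, neg_neg, Int.toNat_one, pow_one, LieAlgebra.ad_apply, LieHom.map_lie,
        LieHom.map_lie, mdl_E, mdl_E, model_sys.ee1 _ _ h]
  · change mdl (((LieAlgebra.ad ℂ FL (gF i)) ^ (-E₈ i j).toNat) ⁅gF i, gF j⁆) = 0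
    rw [chk_cartan]
    rcases cz_cases i j with rfl | h | h
    · rw [lie_self, map_zero, map_zero]
    · rw [h, neg_zero, Int.toNat_zero, pow_zero, Module.End.one_apply, LieHom.map_lie, mdl_F,
        mdl_F, model_sys.ff0 _ _ h]
    · rw [h, neg_neg, Int.toNat_one, pow_one, LieAlgebra.ad_apply, LieHom.map_lie,
        LieHom.map_lie, mdl_F, mdl_F, model_sys.ff1 _ _ h]

theorem g8_ne (i : Fin 8) : qm (gE i) ≠ 0 := by
  intro h
  have := rel_le ((qm_zero _).1 h)
  rw [LieHom.mem_ker, mdl_E] at this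
  exact opE_ne i this

end Instance

end E8Model

end

namespace PaperStmt

open LieAlgebra Module

/-- In the simple complex Lie algebra of type E₈ there is an `sl₂`-triple `(e,h,f)`
such that `dim g_e = 84`, `dim [g_e, g_e] = 83`, `e ∉ [g_e, g_e]`, and hence `g_e` is
the direct sum of the span of `e` and `[g_e, g_e]`. -/
theorem exists_sl2Triple_e₈ :
    ∃ e h f : LieAlgebra.e₈ ℂ, IsSl2Triple h e f ∧
      Module.finrank ℂ (centralizerOf ℂ e).toSubmodule = 84 ∧
      Module.finrank ℂ (derivedOf ℂ (centralizerOf ℂ e)) = 83 ∧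
      e ∉ derivedOf ℂ (centralizerOf ℂ e) ∧
      (centralizerOf ℂ e).toSubmodule
        = Submodule.span ℂ {e} ⊔ derivedOf ℂ (centralizerOf ℂ e) ∧
      Submodule.span ℂ {e} ⊓ derivedOf ℂ (centralizerOf ℂ e) = ⊥ := by
  set E : Fin 8 → LieAlgebra.e₈ ℂ := fun i => E8Model.qm (E8Model.gE i)
  set F : Fin 8 → LieAlgebra.e₈ ℂ := fun i => E8Model.qm (E8Model.gF i)
  set H : Fin 8 → LieAlgebra.e₈ ℂ := fun i => E8Model.qm (E8Model.gH i)
  have S : E8Model.Sys E F H := E8Model.g8_sys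
  have hE : ∀ i, E i ≠ 0 := E8Model.g8_ne
  have hG : E8Model.Gen E F := E8Model.g8_gen
  have hfin : Module.Finite ℂ (LieAlgebra.e₈ ℂ) := Module.Finite.of_basis (S.basis hE hG)
  set e := E8Model.el E with he
  have hmem : ∀ y, y ∈ (centralizerOf ℂ e).toSubmodule ↔ ⁅e, y⁆ = 0 := by
    intro y
    have h : y ∈ (centralizerOf ℂ e).toSubmodule ↔ ⁅y, e⁆ = 0 := Iff.rfl
    rw [h, ← lie_skew, neg_eq_zero]
  have hcent : (centralizerOf ℂ e).toSubmodule
      = Submodule.span ℂ (Set.range (E8Model.Kb E F H)) := by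
    apply le_antisymm
    · intro y hy
      exact S.cent hE hG y ((hmem y).1 hy)
    · refine Submodule.span_le.2 ?_
      rintro _ ⟨j, rfl⟩
      exact (hmem _).2 (S.Kb_mem j)
  have h84 : Module.finrank ℂ (centralizerOf ℂ e).toSubmodule = 84 := by
    rw [hcent, finrank_span_eq_card (S.Kb_li hE hG), Fintype.card_fin]
  have hD : derivedOf ℂ (centralizerOf ℂ e) = E8Model.Dr E := by
    unfold derivedOf bracketSpan E8Model.Dr
    congr 1
    ext z
    simp only [Set.mem_ofPred_eq, hmem]
    rfl
  have hnot : e ∉ E8Model.Dr E := fun h => S.lam_e hE hG (S.lam_Dr hE hG e h)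
  have hsup : (centralizerOf ℂ e).toSubmodule = Submodule.span ℂ {e} ⊔ E8Model.Dr E := by
    apply le_antisymm
    · rw [hcent]
      refine Submodule.span_le.2 ?_
      rintro _ ⟨j, rfl⟩
      exact S.Kb_mem_Dr j
    · refine sup_le ?_ ?_
      · rw [Submodule.span_singleton_le_iff_mem, hmem, lie_self]
      · unfold E8Model.Dr
        refine Submodule.span_le.2 ?_
        rintro _ ⟨x, hx, y, hy, rfl⟩
        refine (hmem _).2 ?_
        rw [he, leibniz_lie, hx, hy, zero_lie, lie_zero, add_zero]
  have hinf : Submodule.span ℂ {e} ⊓ E8Model.Dr E = ⊥ := by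
    rw [eq_bot_iff]
    rintro z ⟨hz1, hz2⟩
    obtain ⟨c, rfl⟩ := Submodule.mem_span_singleton.1 hz1
    by_cases hc : c = 0
    · rw [hc, zero_smul]
      exact zero_mem _
    · exact absurd (((E8Model.Dr E).smul_mem_iff hc).1 hz2) hnot
  have he0 : e ≠ 0 := fun h => hnot (h ▸ zero_mem _)
  have h83 : Module.finrank ℂ (E8Model.Dr E) = 83 := by
    have h := Submodule.finrank_sup_add_finrank_inf_eq (Submodule.span ℂ {e}) (E8Model.Dr E)
    rw [hinf, ← hsup, h84, finrank_bot, finrank_span_singleton he0] at h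
    omega
  refine ⟨e, E8Model.tH H E8Model.ch, E8Model.fl F, S.triple hE, h84, ?_⟩
  rw [hD]
  exact ⟨h83, hnot, hsup, hinf⟩

end PaperStmt
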